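/- For each d ∈ ℕ there is a constant c(d) > 0 such that for every F ∈ 𝔉_d^s and every n ∈ ℕ one has ρ(F^n, e(nF)) ≤ c(d) · n^{−1/2}. -/

import Mathlib

open MeasureTheory RealInnerProductSpace
open scoped ENNReal

noncomputable section

abbrev Euc (d : ℕ) := EuclideanSpace ℝ (Fin d)

/-- Convolution of two measures on an additive structure. -/
def mconv {α : Type*} [MeasurableSpace α] [Add α] (μ ν : Measure α) : Measure α :=
  (μ.prod ν).map (fun p => p.1 + p.2)

/-- Convolution power `μ^{*n}`, with `μ^{*0}` the Dirac measure at `0`. -/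
def convPow {α : Type*} [MeasurableSpace α] [AddMonoid α] (μ : Measure α) : ℕ → Measure α
  | 0 => Measure.dirac 0
  | n + 1 => mconv (convPow μ n) μ

/-- Convolution product of a finite family of measures. -/
def convProd {α : Type*} [MeasurableSpace α] [AddMonoid α] :
    ∀ {n : ℕ}, (Fin n → Measure α) → Measure α
  | 0, _ => Measure.dirac 0
  | n + 1, G => mconv (convProd (fun i : Fin n => G i.castSucc)) (G (Fin.last n))

/-- The compound Poisson measure `e(a·μ) = e^{-a} ∑_k a^k μ^{*k}/k!`. -/
def cpois {α : Type*} [MeasurableSpace α] [AddMonoid α] (a : ℝ) (μ : Measure α) : Measure α :=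
  Measure.sum fun k : ℕ =>
    (ENNReal.ofReal (Real.exp (-a) * a ^ k / k.factorial)) • convPow μ k

/-- A measure is symmetric if it is invariant under `x ↦ -x`. -/
def IsSymmMeasure {d : ℕ} (μ : Measure (Euc d)) : Prop :=
  μ.map (fun x => -x) = μ

/-- Characteristic function of a measure on `ℝ^d`. -/
def charFn {d : ℕ} (μ : Measure (Euc d)) (t : Euc d) : ℂ :=
  ∫ x, Complex.exp ((⟪t, x⟫ : ℂ) * Complex.I) ∂μ

/-- Characteristic function of a measure on `ℝ`. -/
def charFn1 (μ : Measure ℝ) (t : ℝ) : ℂ :=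
  ∫ x, Complex.exp (((t * x : ℝ) : ℂ) * Complex.I) ∂μ

/-- Convex polyhedra determined by the directions `t 1, …, t m`. -/
def polyhedraOn {d m : ℕ} (t : Fin m → Euc d) : Set (Set (Euc d)) :=
  {X | ∃ a b : Fin m → EReal,
    X = {x | ∀ j, a j ≤ ((⟪x, t j⟫ : ℝ) : EReal) ∧ ((⟪x, t j⟫ : ℝ) : EReal) ≤ b j}}

/-- The collection `𝔛_m` of convex polyhedra determined by `m` pairs of parallel hyperplanes. -/
def polyhedra (d m : ℕ) : Set (Set (Euc d)) :=
  {X | ∃ t : Fin m → Euc d, X ∈ polyhedraOn t}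

/-- The distance `ρ_m(G,H) = sup_{X ∈ 𝔛_m} |G{X} - H{X}|`. -/
def rhoPoly {d : ℕ} (m : ℕ) (G H : Measure (Euc d)) : ℝ :=
  ⨆ X ∈ polyhedra d m, |(G X).toReal - (H X).toReal|

/-- The Lévy concentration function `Q(μ, b) = sup_x μ[x, x+b]`. -/
def concFn (μ : Measure ℝ) (b : ℝ) : ℝ :=
  ⨆ x : ℝ, (μ (Set.Icc x (x + b))).toReal

/-- `q(H, X) = inf_{‖t‖=1} Q(𝓛(⟨ξ,t⟩), λ{⟨x,t⟩ : x ∈ X})` where `H = 𝓛(ξ)`. -/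
def qFn {d : ℕ} (H : Measure (Euc d)) (X : Set (Euc d)) : ℝ :=
  ⨅ t ∈ {t : Euc d | ‖t‖ = 1},
    concFn (H.map fun x => ⟪x, t⟫) (volume ((fun x => ⟪x, t⟫) '' X)).toReal

/-- The uniform (Kolmogorov) distance on `ℝ^d`. -/
def kolmDist {d : ℕ} (G H : Measure (Euc d)) : ℝ :=
  ⨆ x : Euc d, |(G {y | ∀ i, y i ≤ x i}).toReal - (H {y | ∀ i, y i ≤ x i}).toReal|

/-- The uniform (Kolmogorov) distance on `ℝ`. -/
def kolmDist1 (G H : Measure ℝ) : ℝ :=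
  ⨆ x : ℝ, |(G (Set.Iic x)).toReal - (H (Set.Iic x)).toReal|

end

/-
Fix an orthant `B` and let `p k = F^k(B)`. Poisson averaging over the exponent preserves linear
functions of `k`, and the Poisson variance is `n`, so it suffices to approximate `p k` by
`p n + (k - n) D` up to `O(n^{-1/2} (1 + (k - n)² / n))`. By a discrete Taylor formula this follows
from bounds `O(n^{-1/2})` and `O(n^{-3/2})` for first and second differences of `p` or of a function
that is `O(n^{-1/2})`-close to it.

These come from writing `p` approximately as a power sum. By symmetry, `F^k` is the law of the sum
of any `k` of i.i.d. variables `X_i ∼ F`, with arbitrary signs. So for `η` and every `ω` in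
`{±1}^M`, `p #{i | η i = -1}` is the probability that `S (ω η) - S ω ∈ B`, where `S ω` is the sum
of the `X_i` with `ω i = -1`. As the comparison kernel of `N` reals has `γ₂` norm `O(log N)`,
averaging over `ω` bounds the `ℓ¹` norm of the Walsh coefficients of this function of `η` by
`(M + 1)^d`. The walk that starts at `1` and flips random coordinates then yields
`G t = ∑_A W_A λ_A^t ∈ [0, 1]` with `|λ_A| ≤ 1` and `|G t - p t| ≤ t² / M`; take `M = n³`.

For `y_A = λ_A² ∈ [0, 1]`, a bounded sequence `∑_A W_A y_A^s` with `∑_A |W_A|` polynomial in `n` has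
`r`-th differences `O(n^{-3r/4})` at `s ≥ n / 4`: with `L` of order `n^{3/4}`, some polynomial in
the shift has norm `O(L^{-r})` and agrees with `(1 - y)^r` up to an error which, weighted by `y^s`,
is smaller than any prescribed power of `n`. Squaring restricts this to even exponents; neighbouring
exponents are compared by the Littlewood–Offord bound `p (k + 1) - p k = O(k^{-1/2})`.
-/

open ProbabilityTheory Set Polynomial
open scoped BigOperators BoundedContinuousFunction Finset

-- Walsh functions on the discrete cube

section Walsh

variable {ι : Type*}

/-- The Walsh function of `A ⊆ ι`: the character `ω ↦ ∏_{i ∈ A} ω i` of the discrete cube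
`{±1}^ι`. -/
def walsh (A : Finset ι) : (ι → ℤˣ) →* ℝ where
  toFun ω := ∏ i ∈ A, ((ω i : ℤ) : ℝ)
  map_one' := by simp
  map_mul' ω η := by simp [Finset.prod_mul_distrib]

lemma walsh_mul_self (A : Finset ι) (ω : ι → ℤˣ) : walsh A ω * walsh A ω = 1 := by
  rw [← map_mul, show ω * ω = 1 from funext fun i => Int.units_mul_self (ω i), map_one]

lemma abs_walsh (A : Finset ι) (ω : ι → ℤˣ) : |walsh A ω| = 1 := by
  rw [← abs_one, abs_eq_abs, ← mul_self_eq_mul_self_iff, walsh_mul_self, one_mul]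

variable [Fintype ι]

lemma sum_walsh [DecidableEq ι] (ω : ι → ℤˣ) :
    ∑ A, walsh A ω = if ω = 1 then (Fintype.card (ι → ℤˣ) : ℝ) else 0 := by
  have sum_eq_prod : ∑ A, walsh A ω = ∏ i, (1 + ((ω i : ℤ) : ℝ)) := by
    rw [Finset.prod_one_add, Finset.powerset_univ]
    rfl
  rw [sum_eq_prod]
  split_ifs with h
  · simp [h, one_add_one_eq_two]
  · obtain ⟨i, hi⟩ := Function.ne_iff.1 h
    refine Finset.prod_eq_zero (Finset.mem_univ i) ?_
    rw [(Int.units_eq_one_or (ω i)).resolve_left hi]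
    simp

/-- The Walsh coefficient `𝔼 ω, walsh A ω * f ω` of a function `f` on the discrete cube. -/
noncomputable def walshCoeff [DecidableEq ι] (f : (ι → ℤˣ) → ℝ) (A : Finset ι) : ℝ :=
  𝔼 ω, walsh A ω * f ω

variable [DecidableEq ι]

lemma sum_walshCoeff_mul_walsh (f : (ι → ℤˣ) → ℝ) (η : ι → ℤˣ) :
    ∑ A, walshCoeff f A * walsh A η = f η := by
  calc ∑ A, walshCoeff f A * walsh A η = 𝔼 ω, (∑ A, walsh A (ω * η)) * f ω := by
        simp only [walshCoeff, Finset.expect_mul, Finset.sum_mul, map_mul]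
        rw [← Finset.expect_sum_comm]
        exact Finset.expect_congr rfl fun ω _ => Finset.sum_congr rfl fun A _ => by ring
    _ = f η := by
        simp only [sum_walsh, mul_eq_one_iff_eq_inv, ite_mul, zero_mul]
        rw [Finset.expect_eq_sum_div_card, Finset.sum_ite_eq' Finset.univ η⁻¹]
        have inv_eq_self : η⁻¹ = η := funext fun i => Int.units_inv_eq_self (η i)
        rw [if_pos (Finset.mem_univ _), inv_eq_self, Finset.card_univ,
          mul_div_cancel_left₀ _ (Nat.cast_ne_zero.2 Fintype.card_ne_zero)]

lemma sum_walshCoeff_sq (f : (ι → ℤˣ) → ℝ) : ∑ A, walshCoeff f A ^ 2 = 𝔼 ω, f ω ^ 2 := by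
  calc ∑ A, walshCoeff f A ^ 2 = ∑ A, 𝔼 ω, walshCoeff f A * walsh A ω * f ω := by
        simp only [sq, mul_assoc, ← Finset.mul_expect, walshCoeff]
    _ = 𝔼 ω, f ω ^ 2 := by
        simp only [← Finset.expect_sum_comm, ← Finset.sum_mul, sum_walshCoeff_mul_walsh, sq]

end Walsh

-- Kernels with small γ₂ norm

section GammaTwo

variable {Ω Ω' : Type*}

/-- `GammaTwoLE k c` says that the kernel `k` has `γ₂` norm at most `c`: it factors as
`k ω ω' = ⟪f ω, h ω'⟫` through a Euclidean space, with `‖f ω‖² ≤ c` and `‖h ω'‖² ≤ c`. -/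
def GammaTwoLE (k : Ω → Ω' → ℝ) (c : ℝ) : Prop :=
  ∃ (Q : Type) (_ : Fintype Q) (f : Ω → Q → ℝ) (h : Ω' → Q → ℝ),
    (∀ ω ω', k ω ω' = ∑ q, f ω q * h ω' q) ∧
      (∀ ω, ∑ q, f ω q ^ 2 ≤ c) ∧ ∀ ω', ∑ q, h ω' q ^ 2 ≤ c

lemma gammaTwoLE_zero : GammaTwoLE (fun (_ : Ω) (_ : Ω') => 0) 0 :=
  ⟨Empty, inferInstance, 0, 0, by simp, by simp, by simp⟩

lemma gammaTwoLE_one : GammaTwoLE (fun (_ : Ω) (_ : Ω') => 1) 1 :=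
  ⟨Unit, inferInstance, 1, 1, by simp, by simp, by simp⟩

namespace GammaTwoLE

lemma add {k k' : Ω → Ω' → ℝ} {c c' : ℝ} (hk : GammaTwoLE k c) (hk' : GammaTwoLE k' c') :
    GammaTwoLE (fun ω ω' => k ω ω' + k' ω ω') (c + c') := by
  obtain ⟨Q, _, f, h, hfh, hf, hh⟩ := hk
  obtain ⟨Q', _, f', h', hfh', hf', hh'⟩ := hk'
  refine ⟨Q ⊕ Q', inferInstance, fun ω => Sum.elim (f ω) (f' ω), fun ω' => Sum.elim (h ω') (h' ω'),
    fun ω ω' => ?_, fun ω => ?_, fun ω' => ?_⟩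
  · simp [hfh, hfh']
  · simpa using add_le_add (hf ω) (hf' ω)
  · simpa using add_le_add (hh ω') (hh' ω')

lemma mul {k k' : Ω → Ω' → ℝ} {c c' : ℝ} (hc : 0 ≤ c) (hk : GammaTwoLE k c)
    (hk' : GammaTwoLE k' c') : GammaTwoLE (fun ω ω' => k ω ω' * k' ω ω') (c * c') := by
  obtain ⟨Q, _, f, h, hfh, hf, hh⟩ := hk
  obtain ⟨Q', _, f', h', hfh', hf', hh'⟩ := hk'
  refine ⟨Q × Q', inferInstance, fun ω q => f ω q.1 * f' ω q.2, fun ω' q => h ω' q.1 * h' ω' q.2,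
    fun ω ω' => ?_, fun ω => ?_, fun ω' => ?_⟩
  · simp only [hfh, hfh', Fintype.sum_mul_sum, Fintype.sum_prod_type, mul_mul_mul_comm]
  · simp only [mul_pow, Fintype.sum_prod_type, ← Fintype.sum_mul_sum]
    exact mul_le_mul (hf ω) (hf' ω) (by positivity) hc
  · simp only [mul_pow, Fintype.sum_prod_type, ← Fintype.sum_mul_sum]
    exact mul_le_mul (hh ω') (hh' ω') (by positivity) hc

lemma prod {κ : Type*} {k : κ → Ω → Ω' → ℝ} {c : ℝ} (hc : 0 ≤ c)
    (hk : ∀ i, GammaTwoLE (k i) c) (s : Finset κ) :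
    GammaTwoLE (fun ω ω' => ∏ i ∈ s, k i ω ω') (c ^ #s) := by
  classical
  induction s using Finset.induction_on with
  | empty => simpa using gammaTwoLE_one
  | insert i s his ih =>
    simpa only [Finset.prod_insert his, Finset.card_insert_of_notMem his, pow_succ'] using
      (hk i).mul hc ih

end GammaTwoLE

/-- Values of `u` and `v` are matched by the orthonormal basis of `ℝ^N` that they index. -/
lemma gammaTwoLE_eq {N : ℕ} (u : Ω → ℕ) (v : Ω' → ℕ) (P : Ω → Prop) (P' : Ω' → Prop)
    [DecidablePred P] [DecidablePred P'] (hu : ∀ ω, u ω < N) :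
    GammaTwoLE (fun ω ω' => if u ω = v ω' ∧ P ω ∧ P' ω' then 1 else 0) 1 := by
  have unit_ball (P : Prop) [Decidable P] (m : ℕ) :
      ∑ q : Fin N, (if q = m ∧ P then (1 : ℝ) else 0) ^ 2 ≤ 1 := by
    simp only [ite_pow, one_pow, ne_eq, OfNat.ofNat_ne_zero, not_false_eq_true, zero_pow,
      Finset.sum_boole]
    refine mod_cast Finset.card_le_one.2 fun i hi j hj => Fin.ext ?_
    exact (Finset.mem_filter.1 hi).2.1.trans (Finset.mem_filter.1 hj).2.1.symm
  refine ⟨Fin N, inferInstance, fun ω q => if q = u ω ∧ P ω then 1 else 0,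
    fun ω' q => if q = v ω' ∧ P' ω' then 1 else 0, fun ω ω' => ?_,
    fun ω => unit_ball (P ω) (u ω), fun ω' => unit_ball (P' ω') (v ω')⟩
  rw [Finset.sum_eq_single (⟨u ω, hu ω⟩ : Fin N)]
  · simp only [← ite_and, mul_ite, mul_one, mul_zero, true_and]
    congr 1
    simp only [eq_iff_iff]
    tauto
  · intro q _ hq
    exact mul_eq_zero_of_left (if_neg fun hqu => hq (Fin.ext hqu.1)) _
  · simp

lemma lt_iff_half_lt_or (s r : ℕ) : s < r ↔ s / 2 < r / 2 ∨ r / 2 = s / 2 ∧ Odd r ∧ Even s := by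
  rw [Nat.odd_iff, Nat.even_iff]
  omega

/-- Dyadic decomposition: `s < r` exactly when, at one binary digit, `s` and `r` agree above it
and it is `0` for `s` and `1` for `r`; each digit contributes a kernel of `γ₂` norm at most `1`. -/
lemma gammaTwoLE_nat_lt (L : ℕ) (r : Ω → ℕ) (s : Ω' → ℕ) (hr : ∀ ω, r ω < 2 ^ L)
    (hs : ∀ ω', s ω' < 2 ^ L) : GammaTwoLE (fun ω ω' => if s ω' < r ω then 1 else 0) L := by
  induction L generalizing r s with
  | zero =>
    convert gammaTwoLE_zero (Ω := Ω) (Ω' := Ω') using 3 with ω ω'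
    · exact if_neg (by have := hr ω; omega)
    · simp
  | succ L ih =>
    have halves := ih (fun ω => r ω / 2) (fun ω' => s ω' / 2)
      (fun ω => by have := hr ω; omega) (fun ω' => by have := hs ω'; omega)
    have last_digit := gammaTwoLE_eq (N := 2 ^ (L + 1)) (fun ω => r ω / 2) (fun ω' => s ω' / 2)
      (fun ω => Odd (r ω)) (fun ω' => Even (s ω')) fun ω => by have := hr ω; omega
    convert halves.add last_digit using 3 with ω ω'
    · simp only [lt_iff_half_lt_or (s ω') (r ω)]
      by_cases hlt : s ω' / 2 < r ω / 2
      · simp [hlt, hlt.ne']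
      · simp [hlt]
    · simp

lemma gammaTwoLE_le [Fintype Ω'] {L : ℕ} (v : Ω → ℝ) (u : Ω' → ℝ) (hL : Fintype.card Ω' < 2 ^ L) :
    GammaTwoLE (fun ω ω' => if u ω' ≤ v ω then 1 else 0) L := by
  have card_lt (s : Finset Ω') : #s < 2 ^ L := (Finset.card_le_univ s).trans_lt hL
  have rank_lt_iff (ω : Ω) (ω' : Ω') : #{w | u w < u ω'} < #{w | u w ≤ v ω} ↔ u ω' ≤ v ω := by
    constructor
    · contrapose!
      exact fun h => Finset.card_le_card fun w => by simpa using fun hw => lt_of_le_of_lt hw h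
    · refine fun h => Finset.card_lt_card (Finset.ssubset_iff_of_subset ?_ |>.2 ⟨ω', ?_⟩)
      · exact fun w => by simpa using fun hw => (hw.trans_le h).le
      · simpa using h
  simpa only [rank_lt_iff] using gammaTwoLE_nat_lt L (fun ω => #{w | u w ≤ v ω})
    (fun ω' => #{w | u w < u ω'}) (fun _ => card_lt _) fun _ => card_lt _

lemma GammaTwoLE.sum_abs_walshCoeff_le {ι : Type*} [Fintype ι] [DecidableEq ι]
    {k : (ι → ℤˣ) → (ι → ℤˣ) → ℝ} {c : ℝ} (hk : GammaTwoLE k c) :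
    ∑ A, |walshCoeff (fun η => 𝔼 ω, k ω (ω * η)) A| ≤ c := by
  obtain ⟨Q, _, f, h, hfh, hf, hh⟩ := hk
  have coeff_eq (A : Finset ι) : walshCoeff (fun η => 𝔼 ω, k ω (ω * η)) A =
      ∑ q, walshCoeff (f · q) A * walshCoeff (h · q) A := by
    calc walshCoeff (fun η => 𝔼 ω, k ω (ω * η)) A
      _ = 𝔼 ω, 𝔼 η, walsh A ω * walsh A (ω * η) * k ω (ω * η) := by
          simp only [walshCoeff, Finset.mul_expect, map_mul, ← mul_assoc, walsh_mul_self, one_mul]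
          exact Finset.expect_comm _ _ _
      _ = 𝔼 ω, 𝔼 ω', walsh A ω * walsh A ω' * k ω ω' :=
          Finset.expect_congr rfl fun ω _ =>
            Fintype.expect_equiv (Equiv.mulLeft ω) _ _ fun _ => rfl
      _ = _ := by
          simp only [walshCoeff, hfh, Finset.mul_sum, Fintype.expect_mul_expect,
            ← Finset.expect_sum_comm, mul_mul_mul_comm]
  have norm_sum_le (g : (ι → ℤˣ) → Q → ℝ) (hg : ∀ ω, ∑ q, g ω q ^ 2 ≤ c) :
      ∑ A, ∑ q, walshCoeff (g · q) A ^ 2 ≤ c := by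
    rw [Finset.sum_comm]
    simp only [sum_walshCoeff_sq, ← Finset.expect_sum_comm]
    exact Finset.expect_le Finset.univ_nonempty fun ω _ => hg ω
  calc ∑ A, |walshCoeff (fun η => 𝔼 ω, k ω (ω * η)) A|
    _ ≤ ∑ A, ∑ q, (walshCoeff (f · q) A ^ 2 + walshCoeff (h · q) A ^ 2) / 2 := by
        gcongr with A
        rw [coeff_eq]
        refine (Finset.abs_sum_le_sum_abs _ _).trans (Finset.sum_le_sum fun q _ => ?_)
        have := two_mul_le_add_sq |walshCoeff (f · q) A| |walshCoeff (h · q) A|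
        rw [abs_mul]
        simp only [sq_abs] at this
        linarith
    _ ≤ c := by
        simp only [← Finset.sum_div, Finset.sum_add_distrib]
        linarith [norm_sum_le f hf, norm_sum_le h hh]

end GammaTwo

-- Convolution powers and random signs

section ConvPow

variable {E : Type*} [MeasurableSpace E]

instance isProbabilityMeasure_convPow [AddMonoid E] [MeasurableAdd₂ E] (F : Measure E)
    [IsProbabilityMeasure F] (n : ℕ) : IsProbabilityMeasure (convPow F n) := by
  induction n with
  | zero => exact Measure.dirac.isProbabilityMeasure
  | succ n ih => exact inferInstanceAs (IsProbabilityMeasure (convPow F n ∗ F))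

lemma convPow_map {E' : Type*} [MeasurableSpace E'] [AddMonoid E] [AddMonoid E'] [MeasurableAdd₂ E]
    [MeasurableAdd₂ E'] (F : Measure E) [IsProbabilityMeasure F] {φ : E →+ E'} (hφ : Measurable φ)
    (n : ℕ) : convPow (F.map φ) n = (convPow F n).map φ := by
  induction n with
  | zero => simp [convPow, Measure.map_dirac' hφ]
  | succ n ih =>
    change convPow (F.map φ) n ∗ F.map φ = (convPow F n ∗ F).map φ
    rw [ih, Measure.map_conv_addMonoidHom φ hφ]

lemma cpois_map {E' : Type*} [MeasurableSpace E'] [AddMonoid E] [AddMonoid E'] [MeasurableAdd₂ E]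
    [MeasurableAdd₂ E'] (F : Measure E) [IsProbabilityMeasure F] {φ : E →+ E'} (hφ : Measurable φ)
    (r : ℝ) : cpois r (F.map φ) = (cpois r F).map φ := by
  simp only [cpois, convPow_map F hφ, Measure.map_sum hφ.aemeasurable, Measure.map_smul]

lemma map_units_smul [AddCommGroup E] (F : Measure E) [F.IsNegInvariant] (u : ℤˣ) :
    F.map (u • ·) = F := by
  rcases Int.units_eq_one_or u with rfl | rfl
  · simp
  · simp [Measure.map_neg_eq_self]

variable [AddCommGroup E] [MeasurableAdd₂ E] [MeasurableNeg E]
  {ι : Type*} [Fintype ι] (F : Measure E) [IsProbabilityMeasure F] [F.IsNegInvariant]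

lemma map_sum_units_smul (ω : ι → ℤˣ) (J : Finset ι) :
    (Measure.pi fun _ : ι => F).map (fun a => ∑ i ∈ J, ω i • a i) = convPow F #J := by
  classical
  have indep : iIndepFun (fun (i : ι) (a : ι → E) => ω i • a i) (Measure.pi fun _ : ι => F) :=
    iIndepFun_pi (X := fun i (a : E) => ω i • a) fun i => by fun_prop
  induction J using Finset.induction_on with
  | empty => simp [convPow, Measure.map_const]
  | insert j J hj ih =>
    have sum_indep := indep.indepFun_finsetSum_of_notMem (fun i => by fun_prop) hj
    have law_last : (Measure.pi fun _ : ι => F).map (fun a : ι → E => ω j • a j) = F := by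
      change Measure.map ((ω j • ·) ∘ Function.eval j) _ = F
      rw [← Measure.map_map (by fun_prop) (by fun_prop),
        (measurePreserving_eval (fun _ : ι => F) j).map_eq, map_units_smul]
    have law_sum := sum_indep.map_add_eq_map_conv_map₀ (by fun_prop)
      (Measurable.aemeasurable (by fun_prop))
    simp only [Finset.sum_fn] at law_sum
    rw [ih, law_last] at law_sum
    simp only [Finset.sum_insert hj, Finset.card_insert_of_notMem hj, add_comm (ω j • _)]
    exact law_sum

lemma integral_indicator_sum_units_smul {B : Set E} (hB : MeasurableSet B) (ω : ι → ℤˣ)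
    (J : Finset ι) :
    ∫ a, B.indicator (1 : E → ℝ) (∑ i ∈ J, ω i • a i) ∂(Measure.pi fun _ : ι => F) =
      (convPow F #J).real B := by
  have sum_measurable : Measurable fun a : ι → E => ∑ i ∈ J, ω i • a i := by fun_prop
  rw [← integral_map sum_measurable.aemeasurable
      (measurable_one.indicator hB).aestronglyMeasurable,
    map_sum_units_smul, integral_indicator_one hB]

end ConvPow

lemma integrable_indicator_one_comp {α E : Type*} [MeasurableSpace α] [MeasurableSpace E]
    {μ : Measure α} [IsFiniteMeasure μ] {S : α → E} (hS : Measurable S) {B : Set E}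
    (hB : MeasurableSet B) : Integrable (fun a => B.indicator (1 : E → ℝ) (S a)) μ :=
  (integrable_const (1 : ℝ)).indicator (hS hB)

lemma integrable_expect {α Ω : Type*} [MeasurableSpace α] [Fintype Ω] {μ : Measure α}
    {f : Ω → α → ℝ} (hf : ∀ ω, Integrable (f ω) μ) : Integrable (fun a => 𝔼 ω, f ω a) μ := by
  simp only [Finset.expect_eq_sum_div_card]
  exact (integrable_finsetSum _ fun ω _ => hf ω).div_const _

lemma integral_expect {α Ω : Type*} [MeasurableSpace α] [Fintype Ω] {μ : Measure α}
    {f : Ω → α → ℝ} (hf : ∀ ω, Integrable (f ω) μ) :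
    ∫ a, 𝔼 ω, f ω a ∂μ = 𝔼 ω, ∫ a, f ω a ∂μ := by
  simp only [Finset.expect_eq_sum_div_card]
  rw [integral_div, integral_finsetSum _ fun ω _ => hf ω]

lemma indicator_Iic_eq_prod {κ : Type*} [Fintype κ] (b y : κ → ℝ) :
    (Iic b).indicator (1 : (κ → ℝ) → ℝ) y = ∏ c, if y c ≤ b c then 1 else 0 := by
  classical
  simp only [Fintype.prod_boole, Set.indicator_apply, Set.mem_Iic, Pi.le_def, Pi.one_apply]

section WalshNorm

variable {ι κ : Type*} [Fintype ι] [Fintype κ]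

lemma gammaTwoLE_indicator_Iic {Ω : Type*} [Fintype Ω] {L : ℕ} (b : κ → ℝ) (S : Ω → κ → ℝ)
    (hL : Fintype.card Ω < 2 ^ L) :
    GammaTwoLE (fun ω ω' => (Iic b).indicator (1 : (κ → ℝ) → ℝ) (S ω' - S ω))
      ((L : ℝ) ^ Fintype.card κ) := by
  simp only [indicator_Iic_eq_prod, Pi.sub_apply, sub_le_iff_le_add]
  exact GammaTwoLE.prod (Nat.cast_nonneg L)
    (fun c => gammaTwoLE_le (fun ω => b c + S ω c) (fun ω' => S ω' c) hL) Finset.univ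

/-- The number of minus signs of a point of the discrete cube. -/
def minusCount (η : ι → ℤˣ) : ℕ := #{i | η i = -1}

lemma minusCount_one : minusCount (1 : ι → ℤˣ) = 0 := by simp [minusCount]

lemma sum_minus_mul_sub_sum_minus {E : Type*} [AddCommGroup E] (a : ι → E) (ω η : ι → ℤˣ) :
    ∑ i with (ω * η) i = -1, a i - ∑ i with ω i = -1, a i = ∑ i with η i = -1, ω i • a i := by
  simp only [Finset.sum_filter, ← Finset.sum_sub_distrib]
  refine Finset.sum_congr rfl fun i _ => ?_
  rcases Int.units_eq_one_or (ω i) with hω | hω <;>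
    rcases Int.units_eq_one_or (η i) with hη | hη <;>
    simp [hω, hη]

variable [DecidableEq ι]

lemma sum_abs_walshCoeff_integral_le {α : Type*} [MeasurableSpace α] (μ : Measure α)
    [IsProbabilityMeasure μ] {f : α → (ι → ℤˣ) → ℝ} {c : ℝ}
    (hf : ∀ η, Integrable (f · η) μ) (hc : ∀ a, ∑ A, |walshCoeff (f a) A| ≤ c) :
    ∑ A, |walshCoeff (fun η => ∫ a, f a η ∂μ) A| ≤ c := by
  have coeff_integrable (A : Finset ι) : Integrable (fun a => walshCoeff (f a) A) μ :=
    integrable_expect fun η => (hf η).const_mul _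
  have coeff_integral (A : Finset ι) :
      walshCoeff (fun η => ∫ a, f a η ∂μ) A = ∫ a, walshCoeff (f a) A ∂μ := by
    simp only [walshCoeff, ← integral_const_mul]
    exact (integral_expect fun η => (hf η).const_mul _).symm
  calc ∑ A, |walshCoeff (fun η => ∫ a, f a η ∂μ) A|
    _ ≤ ∑ A, ∫ a, |walshCoeff (f a) A| ∂μ := by
        gcongr with A
        rw [coeff_integral]
        exact abs_integral_le_integral_abs
    _ = ∫ a, ∑ A, |walshCoeff (f a) A| ∂μ :=
        (integral_finsetSum _ fun A _ => (coeff_integrable A).abs).symm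
    _ ≤ ∫ _, c ∂μ :=
        integral_mono (integrable_finsetSum _ fun A _ => (coeff_integrable A).abs)
          (integrable_const c) hc
    _ = c := by simp

/-- For every `ω`, the value at `η` is the expectation of a comparison kernel at `(ω, ω * η)`. -/
lemma sum_abs_walshCoeff_convPow_minusCount_le (F : Measure (κ → ℝ)) [IsProbabilityMeasure F]
    [F.IsNegInvariant] (b : κ → ℝ) :
    ∑ A, |walshCoeff (fun η : ι → ℤˣ => (convPow F (minusCount η)).real (Iic b)) A| ≤
      (Fintype.card ι + 1 : ℝ) ^ Fintype.card κ := by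
  let S (a : ι → κ → ℝ) (ω : ι → ℤˣ) : κ → ℝ := ∑ i with ω i = -1, a i
  let k (a : ι → κ → ℝ) (ω ω' : ι → ℤˣ) : ℝ :=
    (Iic b).indicator (1 : (κ → ℝ) → ℝ) (S a ω' - S a ω)
  have k_integrable (ω ω' : ι → ℤˣ) : Integrable (k · ω ω') (Measure.pi fun _ : ι => F) :=
    integrable_indicator_one_comp (by fun_prop) measurableSet_Iic
  have integral_k (ω η : ι → ℤˣ) : ∫ a, k a ω (ω * η) ∂(Measure.pi fun _ : ι => F) =
      (convPow F (minusCount η)).real (Iic b) := by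
    simp only [k, S, sum_minus_mul_sub_sum_minus]
    exact integral_indicator_sum_units_smul F measurableSet_Iic ω _
  have value_eq (η : ι → ℤˣ) : (convPow F (minusCount η)).real (Iic b) =
      ∫ a, 𝔼 ω, k a ω (ω * η) ∂(Measure.pi fun _ : ι => F) := by
    rw [integral_expect fun ω => k_integrable ω (ω * η)]
    simp only [integral_k, Fintype.expect_const]
  have card_cube_lt : Fintype.card (ι → ℤˣ) < 2 ^ (Fintype.card ι + 1) := by
    simp [pow_succ]
  simp only [value_eq]
  refine sum_abs_walshCoeff_integral_le _
    (fun η => integrable_expect fun ω => k_integrable ω (ω * η)) fun a => ?_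
  exact_mod_cast (gammaTwoLE_indicator_Iic b (S a) card_cube_lt).sum_abs_walshCoeff_le

end WalshNorm

-- Littlewood–Offord smoothing of consecutive convolution powers

section LittlewoodOfford

variable {ι : Type*} [DecidableEq ι]

/-- The point of the discrete cube whose only minus sign is at `i`; multiplying by it flips the
`i`-th coordinate. -/
def coordFlip (i : ι) : ι → ℤˣ := Pi.mulSingle i (-1)

lemma mul_coordFlip_self (ω : ι → ℤˣ) (i : ι) : (ω * coordFlip i) i = -ω i := by
  simp [coordFlip]

lemma mul_coordFlip_of_ne (ω : ι → ℤˣ) {i j : ι} (h : j ≠ i) : (ω * coordFlip i) j = ω j := by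
  simp [coordFlip, h]

variable [Fintype ι]

lemma expect_mul_sign_eq_zero {f : (ι → ℤˣ) → ℝ} {j : ι} (hf : ∀ ω, f (ω * coordFlip j) = f ω) :
    𝔼 ω, f ω * ((ω j : ℤ) : ℝ) = 0 := by
  have flipped : 𝔼 ω, f ω * ((ω j : ℤ) : ℝ) = 𝔼 ω, -(f ω * ((ω j : ℤ) : ℝ)) :=
    (Fintype.expect_equiv (Equiv.mulRight (coordFlip j)) _ _ fun ω => by
      change _ = f (ω * coordFlip j) * (((ω * coordFlip j) j : ℤ) : ℝ)
      rw [hf, mul_coordFlip_self, Units.val_neg, Int.cast_neg, mul_neg]).symm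
  rw [Finset.expect_neg_distrib] at flipped
  linarith

lemma expect_sum_sign_mul_sq (s : ι → ℝ) :
    𝔼 ω : ι → ℤˣ, (∑ j, ((ω j : ℤ) : ℝ) * s j) ^ 2 = ∑ j, s j ^ 2 := by
  have orthogonal (i j : ι) : 𝔼 ω : ι → ℤˣ, ((ω i : ℤ) : ℝ) * ((ω j : ℤ) : ℝ) =
      if i = j then 1 else 0 := by
    split_ifs with h
    · subst h
      simp [← Int.cast_mul, ← Units.val_mul]
    · exact expect_mul_sign_eq_zero fun ω => by rw [mul_coordFlip_of_ne ω h]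
  calc 𝔼 ω : ι → ℤˣ, (∑ j, ((ω j : ℤ) : ℝ) * s j) ^ 2
    _ = ∑ i, ∑ j, (𝔼 ω : ι → ℤˣ, ((ω i : ℤ) : ℝ) * ((ω j : ℤ) : ℝ)) * (s i * s j) := by
        simp only [sq, Finset.sum_mul_sum, mul_mul_mul_comm _ (s _), Finset.expect_sum_comm,
          ← Finset.expect_mul]
    _ = ∑ j, s j ^ 2 := by simp [orthogonal, sq]

lemma expect_abs_sum_sign_mul_le {s : ι → ℝ} (hs : ∀ j, |s j| ≤ 1) :
    𝔼 ω : ι → ℤˣ, |∑ j, ((ω j : ℤ) : ℝ) * s j| ≤ √(Fintype.card ι) := by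
  refine Real.le_sqrt_of_sq_le ?_
  have cauchy_schwarz := Finset.expect_mul_sq_le_sq_mul_sq Finset.univ
    (fun ω : ι → ℤˣ => |∑ j, ((ω j : ℤ) : ℝ) * s j|) 1
  simp only [Pi.one_apply, mul_one, sq_abs, one_pow, Fintype.expect_const,
    expect_sum_sign_mul_sq] at cauchy_schwarz
  refine cauchy_schwarz.trans ((Finset.sum_le_card_nsmul _ _ 1 fun j _ => ?_).trans_eq (by simp))
  exact (sq_le_one_iff_abs_le_one _).2 (hs j)

lemma abs_sub_eq_mul_sign_of_antitone {h : ℝ → ℝ} (hh : Antitone h) (x v : ℝ) (u : ℤˣ) :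
    |h (x + u • v) - h x| = (h x - h (x + u • v)) * (((u : ℤ) : ℝ) * Real.sign v) := by
  have abs_of_nonneg_shift {w : ℝ} (hw : 0 ≤ w) : |h (x + w) - h x| = h x - h (x + w) := by
    rw [abs_sub_comm, abs_of_nonneg (sub_nonneg.2 (hh (le_add_of_nonneg_right hw)))]
  have abs_of_nonpos_shift {w : ℝ} (hw : w ≤ 0) : |h (x + w) - h x| = h (x + w) - h x :=
    abs_of_nonneg (sub_nonneg.2 (hh (add_le_of_nonpos_right hw)))
  rcases Int.units_eq_one_or u with rfl | rfl <;> rcases lt_trichotomy v 0 with hv | rfl | hv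
  · simp [abs_of_nonpos_shift hv.le, Real.sign_of_neg hv]
  · simp
  · simp [abs_of_nonneg_shift hv.le, Real.sign_of_pos hv]
  · simp [abs_of_nonneg_shift (neg_nonneg.2 hv.le), Real.sign_of_neg hv]
  · simp
  · simp [abs_of_nonpos_shift (neg_nonpos.2 hv.le), Real.sign_of_pos hv]

lemma abs_sign_le_one (r : ℝ) : |Real.sign r| ≤ 1 := by
  rcases Real.sign_apply_eq r with h | h | h <;> simp [h]

lemma sum_expect_abs_sub_erase_le {h : ℝ → ℝ} (hh : Antitone h) (h_le : ∀ x, |h x| ≤ 1)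
    (s : ι → ℝ) :
    ∑ j, 𝔼 ω : ι → ℤˣ, |h (∑ i, ω i • s i) - h (∑ i ∈ Finset.univ.erase j, ω i • s i)| ≤
      √(Fintype.card ι) := by
  let T (j : ι) (ω : ι → ℤˣ) : ℝ := ∑ i ∈ Finset.univ.erase j, ω i • s i
  have T_flip (j : ι) (ω : ι → ℤˣ) : T j (ω * coordFlip j) = T j ω :=
    Finset.sum_congr rfl fun i hi => by rw [mul_coordFlip_of_ne ω (Finset.ne_of_mem_erase hi)]
  have term_eq (j : ι) : 𝔼 ω : ι → ℤˣ, |h (∑ i, ω i • s i) - h (T j ω)| =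
      𝔼 ω : ι → ℤˣ, -h (∑ i, ω i • s i) * (((ω j : ℤ) : ℝ) * Real.sign (s j)) := by
    have split (ω : ι → ℤˣ) : ∑ i, ω i • s i = T j ω + ω j • s j :=
      (Finset.sum_erase_add _ _ (Finset.mem_univ j)).symm
    have erased_zero : 𝔼 ω, h (T j ω) * Real.sign (s j) * ((ω j : ℤ) : ℝ) = 0 :=
      expect_mul_sign_eq_zero fun ω => by rw [T_flip]
    rw [← sub_eq_zero, ← Finset.expect_sub_distrib, ← erased_zero]
    refine Finset.expect_congr rfl fun ω _ => ?_
    rw [split, abs_sub_eq_mul_sign_of_antitone hh]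
    ring
  calc ∑ j, 𝔼 ω : ι → ℤˣ, |h (∑ i, ω i • s i) - h (T j ω)|
    _ = 𝔼 ω : ι → ℤˣ, -h (∑ i, ω i • s i) * ∑ j, ((ω j : ℤ) : ℝ) * Real.sign (s j) := by
        simp only [term_eq, ← Finset.expect_sum_comm, Finset.mul_sum]
    _ ≤ 𝔼 ω : ι → ℤˣ, |∑ j, ((ω j : ℤ) : ℝ) * Real.sign (s j)| := by
        gcongr with ω
        refine (le_abs_self _).trans ?_
        rw [abs_mul, abs_neg]
        exact mul_le_of_le_one_left (abs_nonneg _) (h_le _)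
    _ ≤ √(Fintype.card ι) := expect_abs_sum_sign_mul_le fun j => abs_sign_le_one _

lemma abs_prod_sub_prod_le {κ : Type*} (t : Finset κ) {f g : κ → ℝ} (hf : ∀ i, |f i| ≤ 1)
    (hg : ∀ i, |g i| ≤ 1) : |∏ i ∈ t, f i - ∏ i ∈ t, g i| ≤ ∑ i ∈ t, |f i - g i| := by
  classical
  induction t using Finset.induction_on with
  | empty => simp
  | insert i t hi ih =>
    have prod_le : |∏ j ∈ t, g j| ≤ 1 := by
      rw [Finset.abs_prod]
      exact Finset.prod_le_one (fun _ _ => abs_nonneg _) fun j _ => hg j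
    rw [Finset.prod_insert hi, Finset.prod_insert hi, Finset.sum_insert hi]
    calc |f i * ∏ j ∈ t, f j - g i * ∏ j ∈ t, g j|
      _ = |(f i - g i) * ∏ j ∈ t, g j + f i * (∏ j ∈ t, f j - ∏ j ∈ t, g j)| := by
          congr 1
          ring
      _ ≤ |f i - g i| * |∏ j ∈ t, g j| + |f i| * |∏ j ∈ t, f j - ∏ j ∈ t, g j| := by
          exact (abs_add_le _ _).trans_eq (by rw [abs_mul, abs_mul])
      _ ≤ |f i - g i| + ∑ j ∈ t, |f j - g j| :=
          add_le_add (mul_le_of_le_one_right (abs_nonneg _) prod_le)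
            ((mul_le_of_le_one_left (abs_nonneg _) (hf i)).trans ih)

variable {κ : Type*} [Fintype κ]

lemma sum_expect_abs_indicator_Iic_sub_le (b : κ → ℝ) (a : ι → κ → ℝ) :
    ∑ j, 𝔼 ω : ι → ℤˣ, |(Iic b).indicator (1 : (κ → ℝ) → ℝ) (∑ i, ω i • a i) -
        (Iic b).indicator (1 : (κ → ℝ) → ℝ) (∑ i ∈ Finset.univ.erase j, ω i • a i)| ≤
      Fintype.card κ * √(Fintype.card ι) := by
  let h (c : κ) (r : ℝ) : ℝ := if r ≤ b c then 1 else 0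
  have h_antitone (c : κ) : Antitone (h c) := fun r r' hr => by
    dsimp only [h]
    split_ifs with h1 h2
    exacts [le_rfl, absurd (hr.trans h1) h2, zero_le_one, le_rfl]
  have abs_h_le (c : κ) (r : ℝ) : |h c r| ≤ 1 := by
    dsimp only [h]
    split_ifs <;> simp
  calc ∑ j, 𝔼 ω : ι → ℤˣ, |(Iic b).indicator (1 : (κ → ℝ) → ℝ) (∑ i, ω i • a i) -
        (Iic b).indicator (1 : (κ → ℝ) → ℝ) (∑ i ∈ Finset.univ.erase j, ω i • a i)|
    _ ≤ ∑ j, 𝔼 ω : ι → ℤˣ, ∑ c, |h c (∑ i, ω i • a i c) -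
          h c (∑ i ∈ Finset.univ.erase j, ω i • a i c)| := by
        gcongr with j _ ω
        simp only [indicator_Iic_eq_prod, Finset.sum_apply, Pi.smul_apply]
        exact abs_prod_sub_prod_le _ (fun c => abs_h_le c _) fun c => abs_h_le c _
    _ = ∑ c, ∑ j, 𝔼 ω : ι → ℤˣ, |h c (∑ i, ω i • a i c) -
          h c (∑ i ∈ Finset.univ.erase j, ω i • a i c)| := by
        simp only [Finset.expect_sum_comm]
        exact Finset.sum_comm
    _ ≤ ∑ _c : κ, √(Fintype.card ι) := by
        gcongr with c
        exact sum_expect_abs_sub_erase_le (h_antitone c) (abs_h_le c) fun i => a i c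
    _ = Fintype.card κ * √(Fintype.card ι) := by simp

lemma abs_convPow_succ_sub_le (F : Measure (κ → ℝ)) [IsProbabilityMeasure F] [F.IsNegInvariant]
    (b : κ → ℝ) (k : ℕ) :
    |(convPow F (k + 1)).real (Iic b) - (convPow F k).real (Iic b)| ≤
      Fintype.card κ / √(k + 1) := by
  let μ := Measure.pi fun _ : Fin (k + 1) => F
  let X (J : Finset (Fin (k + 1))) (ω : Fin (k + 1) → ℤˣ) (a : Fin (k + 1) → κ → ℝ) : ℝ :=
    (Iic b).indicator (1 : (κ → ℝ) → ℝ) (∑ i ∈ J, ω i • a i)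
  have X_integrable (J ω) : Integrable (X J ω) μ :=
    integrable_indicator_one_comp (by fun_prop) measurableSet_Iic
  have diff_integrable (j ω) :
      Integrable (fun a => |X Finset.univ ω a - X (Finset.univ.erase j) ω a|) μ :=
    ((X_integrable _ ω).sub (X_integrable _ ω)).abs
  have diff_le (j : Fin (k + 1)) (ω : Fin (k + 1) → ℤˣ) :
      |(convPow F (k + 1)).real (Iic b) - (convPow F k).real (Iic b)| ≤
        ∫ a, |X Finset.univ ω a - X (Finset.univ.erase j) ω a| ∂μ := by
    refine le_trans (le_of_eq ?_) abs_integral_le_integral_abs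
    rw [integral_sub (X_integrable _ _) (X_integrable _ _),
      integral_indicator_sum_units_smul F measurableSet_Iic,
      integral_indicator_sum_units_smul F measurableSet_Iic]
    simp
  have total_le : (k + 1) * |(convPow F (k + 1)).real (Iic b) - (convPow F k).real (Iic b)| ≤
      Fintype.card κ * √(k + 1) := by
    calc (k + 1) * |(convPow F (k + 1)).real (Iic b) - (convPow F k).real (Iic b)|
      _ = ∑ _j : Fin (k + 1), 𝔼 _ω : Fin (k + 1) → ℤˣ,
            |(convPow F (k + 1)).real (Iic b) - (convPow F k).real (Iic b)| := by simp
      _ ≤ ∑ j, 𝔼 ω, ∫ a, |X Finset.univ ω a - X (Finset.univ.erase j) ω a| ∂μ := by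
          gcongr with j _ ω
          exact diff_le j ω
      _ = ∫ a, ∑ j, 𝔼 ω, |X Finset.univ ω a - X (Finset.univ.erase j) ω a| ∂μ := by
          rw [integral_finsetSum _ fun j _ => integrable_expect (diff_integrable j)]
          simp only [integral_expect (diff_integrable _)]
      _ ≤ ∫ _, Fintype.card κ * √(k + 1) ∂μ :=
          integral_mono
            (integrable_finsetSum _ fun j _ => integrable_expect (diff_integrable j))
            (integrable_const _)
            fun a => (sum_expect_abs_indicator_Iic_sub_le b a).trans_eq (by simp)
      _ = Fintype.card κ * √(k + 1) := by simp
  rw [le_div_iff₀ (by positivity)]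
  refine le_of_mul_le_mul_right ?_ (by positivity : 0 < √((k : ℝ) + 1))
  rwa [mul_assoc, Real.mul_self_sqrt (by positivity), mul_comm]

end LittlewoodOfford

-- The coordinate-flip walk on the discrete cube

section FlipWalk

variable {ι : Type*} [Fintype ι] [DecidableEq ι]

/-- The transition operator of the walk on the discrete cube that flips a uniformly chosen
coordinate. -/
noncomputable def flipAverage (f : (ι → ℤˣ) → ℝ) (η : ι → ℤˣ) : ℝ := 𝔼 i, f (η * coordFlip i)

/-- The eigenvalue of `flipAverage` on the Walsh function of `A`. -/
noncomputable def flipEigenvalue (A : Finset ι) : ℝ := 𝔼 i, walsh A (coordFlip i)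

lemma flipAverage_iterate (f : (ι → ℤˣ) → ℝ) (t : ℕ) (η : ι → ℤˣ) :
    flipAverage^[t] f η = ∑ A, walshCoeff f A * flipEigenvalue A ^ t * walsh A η := by
  induction t generalizing η with
  | zero => simpa using (sum_walshCoeff_mul_walsh f η).symm
  | succ t ih =>
    rw [Function.iterate_succ_apply', flipAverage]
    simp only [ih, Finset.expect_sum_comm, map_mul, ← Finset.mul_expect]
    refine Finset.sum_congr rfl fun A _ => ?_
    rw [flipEigenvalue]
    ring

lemma flipAverage_iterate_mem_Icc [Nonempty ι] {f : (ι → ℤˣ) → ℝ} (hf : ∀ η, f η ∈ Icc (0 : ℝ) 1)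
    (t : ℕ) (η : ι → ℤˣ) : flipAverage^[t] f η ∈ Icc (0 : ℝ) 1 := by
  induction t generalizing η with
  | zero => exact hf η
  | succ t ih =>
    rw [Function.iterate_succ_apply']
    exact ⟨Finset.expect_nonneg fun i _ => (ih _).1,
      Finset.expect_le Finset.univ_nonempty fun i _ => (ih _).2⟩

lemma abs_flipEigenvalue_le [Nonempty ι] (A : Finset ι) : |flipEigenvalue A| ≤ 1 :=
  (Finset.abs_expect_le _ _).trans <|
    Finset.expect_le Finset.univ_nonempty fun i _ => (abs_walsh A (coordFlip i)).le

lemma minusCount_mul_coordFlip {η : ι → ℤˣ} {i : ι} (hi : η i ≠ -1) :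
    minusCount (η * coordFlip i) = minusCount η + 1 := by
  have filter_eq : ({j | (η * coordFlip i) j = -1} : Finset ι) =
      insert i ({j | η j = -1} : Finset ι) := by
    ext j
    rcases eq_or_ne j i with rfl | hj
    · simp only [Finset.mem_filter_univ, Finset.mem_insert_self, mul_coordFlip_self,
        (Int.units_eq_one_or (η j)).resolve_right hi]
    · simp only [Finset.mem_filter_univ, Finset.mem_insert, hj, false_or, mul_coordFlip_of_ne η hj]
  rw [minusCount, filter_eq, Finset.card_insert_of_notMem (by simpa using hi), minusCount]

/-- Up to a small probability, the first `t` flips hit distinct coordinates carrying a plus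
sign. -/
lemma abs_flipAverage_iterate_minusCount_sub_le [Nonempty ι] {p : ℕ → ℝ}
    (hp : ∀ k, p k ∈ Icc (0 : ℝ) 1) (t : ℕ) (η : ι → ℤˣ) :
    |flipAverage^[t] (fun η => p (minusCount η)) η - p (minusCount η + t)| ≤
      t * (minusCount η + t) / Fintype.card ι := by
  induction t generalizing η with
  | zero => simp
  | succ t ih =>
    have one_flip (i : ι) : |flipAverage^[t] (fun η => p (minusCount η)) (η * coordFlip i) -
        p (minusCount η + (t + 1))| ≤
        t * (minusCount η + 1 + t) / Fintype.card ι + if η i = -1 then 1 else 0 := by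
      split_ifs with hi
      · have walk_mem :=
          flipAverage_iterate_mem_Icc (fun η => hp (minusCount η)) t (η * coordFlip i)
        exact (abs_sub_le_of_nonneg_of_le walk_mem.1 walk_mem.2 (hp _).1 (hp _).2).trans
          (le_add_of_nonneg_left (by positivity))
      · have := ih (η * coordFlip i)
        rw [minusCount_mul_coordFlip hi] at this
        simpa only [add_zero, Nat.cast_add, Nat.cast_one, add_assoc, add_comm 1 t] using this
    have expect_minus : 𝔼 i, (if η i = -1 then (1 : ℝ) else 0) =
        minusCount η / Fintype.card ι := by
      rw [Finset.expect_eq_sum_div_card, Finset.sum_boole, Finset.card_univ, minusCount]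
    rw [Function.iterate_succ_apply', flipAverage,
      ← Fintype.expect_const (ι := ι) (p (minusCount η + (t + 1))), ← Finset.expect_sub_distrib]
    calc _ ≤ 𝔼 i, (t * (minusCount η + 1 + t) / Fintype.card ι +
            if η i = -1 then (1 : ℝ) else 0) :=
          (Finset.abs_expect_le _ _).trans (Finset.expect_le_expect fun i _ => one_flip i)
      _ = (t * (minusCount η + 1 + t) + minusCount η) / Fintype.card ι := by
          rw [Finset.expect_add_distrib, expect_minus, Fintype.expect_const, add_div]
      _ ≤ (t + 1 : ℕ) * (minusCount η + (t + 1 : ℕ)) / Fintype.card ι := by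
          gcongr
          push_cast
          nlinarith [(minusCount η).cast_nonneg (α := ℝ), t.cast_nonneg (α := ℝ)]

lemma exists_powerSum_approx_convPow {κ : Type*} [Fintype κ] (F : Measure (κ → ℝ))
    [IsProbabilityMeasure F] [F.IsNegInvariant] (b : κ → ℝ) (M : ℕ) [NeZero M] :
    ∃ W y : Finset (Fin M) → ℝ, ∑ A, |W A| ≤ (M + 1 : ℝ) ^ Fintype.card κ ∧ (∀ A, |y A| ≤ 1) ∧
      (∀ t, ∑ A, W A * y A ^ t ∈ Icc (0 : ℝ) 1) ∧
      ∀ t : ℕ, |∑ A, W A * y A ^ t - (convPow F t).real (Iic b)| ≤ t ^ 2 / M := by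
  let p (k : ℕ) : ℝ := (convPow F k).real (Iic b)
  have hp (k : ℕ) : p k ∈ Icc (0 : ℝ) 1 := ⟨measureReal_nonneg, measureReal_le_one⟩
  let f (η : Fin M → ℤˣ) : ℝ := p (minusCount η)
  have walk_eq (t : ℕ) : ∑ A, walshCoeff f A * flipEigenvalue A ^ t = flipAverage^[t] f 1 := by
    simp [flipAverage_iterate]
  refine ⟨walshCoeff f, flipEigenvalue, ?_, abs_flipEigenvalue_le, fun t => ?_, fun t => ?_⟩
  · simpa using sum_abs_walshCoeff_convPow_minusCount_le (ι := Fin M) F b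
  · rw [walk_eq]
    exact flipAverage_iterate_mem_Icc (fun η => hp _) t 1
  · rw [walk_eq]
    simpa [minusCount_one, sq, f, p] using
      abs_flipAverage_iterate_minusCount_sub_le hp t (1 : Fin M → ℤˣ)

end FlipWalk

-- Differences of bounded power sums

section AverageDefect

/-- The polynomial `q = L⁻¹ ∑_{i < L} (1 - X^i)`, which makes `(1 - X) * (1 - q)` equal to the
small multiple `L⁻¹ (1 - X^L)` of a bounded polynomial. -/
noncomputable def averageDefect (L : ℕ) : ℝ[X] :=
  C (L : ℝ)⁻¹ * ∑ i ∈ Finset.range L, (1 - X ^ i)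

variable {L : ℕ}

lemma one_sub_X_mul_one_sub_averageDefect (hL : L ≠ 0) :
    (1 - X) * (1 - averageDefect L) = C (L : ℝ)⁻¹ * (1 - X ^ L) := by
  have inv_mul_self : C (L : ℝ)⁻¹ * (L : ℝ[X]) = 1 := by
    rw [← C_eq_natCast, ← C_mul, inv_mul_cancel₀ (Nat.cast_ne_zero.2 hL), C_1]
  rw [← mul_neg_geom_sum, averageDefect, Finset.sum_sub_distrib, Finset.sum_const,
    Finset.card_range, nsmul_one, mul_sub (C _), inv_mul_self]
  ring

lemma one_sub_X_mul_one_sub_averageDefect_pow (hL : L ≠ 0) (K : ℕ) :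
    (1 - X) * (1 - averageDefect L ^ K) =
      C (L : ℝ)⁻¹ * (1 - X ^ L) * ∑ i ∈ Finset.range K, averageDefect L ^ i := by
  rw [← one_sub_X_mul_one_sub_averageDefect hL, ← mul_neg_geom_sum, mul_assoc]

section NormedAlgebra

variable {A : Type*} [NormedRing A] [NormOneClass A] {x : A}

lemma norm_one_sub_pow_le (hx : ‖x‖ ≤ 1) (i : ℕ) : ‖1 - x ^ i‖ ≤ 2 := by
  calc ‖1 - x ^ i‖ ≤ ‖(1 : A)‖ + ‖x‖ ^ i :=
        (norm_sub_le _ _).trans (add_le_add_right (norm_pow_le _ _) _)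
    _ ≤ 2 := by
        rw [norm_one]
        linarith [pow_le_one₀ (norm_nonneg x) hx (n := i)]

variable [NormedAlgebra ℝ A]

lemma norm_aeval_averageDefect_le (hx : ‖x‖ ≤ 1) : ‖aeval x (averageDefect L)‖ ≤ 2 := by
  have sum_le : ‖∑ i ∈ Finset.range L, (1 - x ^ i)‖ ≤ L * 2 := by
    simpa using norm_sum_le_of_le (Finset.range L) fun i _ => norm_one_sub_pow_le hx i
  have aeval_eq : aeval x (averageDefect L) = (L : ℝ)⁻¹ • ∑ i ∈ Finset.range L, (1 - x ^ i) := by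
    simp [averageDefect, Algebra.smul_def]
  rw [aeval_eq, norm_smul, norm_inv, Real.norm_natCast]
  exact inv_mul_le_of_le_mul₀ (Nat.cast_nonneg L) zero_le_two sum_le

lemma norm_aeval_one_sub_X_mul_le (hL : L ≠ 0) (K : ℕ) (hx : ‖x‖ ≤ 1) :
    ‖aeval x ((1 - X) * (1 - averageDefect L ^ K))‖ ≤ 2 ^ (K + 1) / L := by
  have aeval_eq : aeval x ((1 - X) * (1 - averageDefect L ^ K)) =
      (L : ℝ)⁻¹ • ((1 - x ^ L) * ∑ i ∈ Finset.range K, aeval x (averageDefect L) ^ i) := by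
    simp [one_sub_X_mul_one_sub_averageDefect_pow hL, Algebra.smul_def, mul_assoc]
  have geom_le : ‖∑ i ∈ Finset.range K, aeval x (averageDefect L) ^ i‖ ≤ 2 ^ K := by
    calc _ ≤ ∑ i ∈ Finset.range K, (2 : ℝ) ^ i := norm_sum_le_of_le _ fun i _ =>
          (norm_pow_le _ _).trans (pow_le_pow_left₀ (norm_nonneg _)
            (norm_aeval_averageDefect_le hx) i)
      _ ≤ 2 ^ K := by
          rw [geom_sum_eq (by norm_num)]
          norm_num
  calc _ = (L : ℝ)⁻¹ * ‖(1 - x ^ L) * ∑ i ∈ Finset.range K, aeval x (averageDefect L) ^ i‖ := by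
        rw [aeval_eq, norm_smul, norm_inv, Real.norm_natCast]
    _ ≤ (L : ℝ)⁻¹ * (2 * 2 ^ K) := by
        gcongr
        exact (norm_mul_le _ _).trans (mul_le_mul (norm_one_sub_pow_le hx L) geom_le
          (norm_nonneg _) zero_le_two)
    _ = 2 ^ (K + 1) / L := by rw [pow_succ']; ring

lemma norm_aeval_one_sub_X_mul_pow_le (hL : L ≠ 0) (K : ℕ) (hx : ‖x‖ ≤ 1) (r : ℕ) :
    ‖aeval x (((1 - X) * (1 - averageDefect L ^ K)) ^ r)‖ ≤ (2 ^ (K + 1) / L) ^ r := by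
  rw [map_pow]
  exact (norm_pow_le _ r).trans
    (pow_le_pow_left₀ (norm_nonneg _) (norm_aeval_one_sub_X_mul_le hL K hx) r)

end NormedAlgebra

lemma pow_mul_one_sub_le {v : ℝ} (h0 : 0 ≤ v) (h1 : v ≤ 1) (m : ℕ) :
    v ^ m * (1 - v) ≤ 1 / (m + 1) := by
  rw [le_div_iff₀ (by positivity)]
  calc v ^ m * (1 - v) * (m + 1) = (1 - v) * ∑ _i ∈ Finset.range (m + 1), v ^ m := by
        rw [Finset.sum_const, Finset.card_range, nsmul_eq_mul, Nat.cast_add_one]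
        ring
    _ ≤ (1 - v) * ∑ i ∈ Finset.range (m + 1), v ^ i :=
        mul_le_mul_of_nonneg_left (Finset.sum_le_sum fun i hi =>
          pow_le_pow_of_le_one h0 h1 (Finset.mem_range_succ_iff.1 hi)) (sub_nonneg.2 h1)
    _ ≤ 1 := by
        rw [mul_neg_geom_sum]
        linarith [pow_nonneg h0 (m + 1)]

variable {y : ℝ} (h0 : 0 ≤ y) (h1 : y ≤ 1)
include h0 h1

lemma eval_averageDefect_mem_Icc : (averageDefect L).eval y ∈ Icc 0 (1 - y ^ L) := by
  have eval_eq : (averageDefect L).eval y = (∑ i ∈ Finset.range L, (1 - y ^ i)) / L := by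
    simp [averageDefect, eval_finsetSum, inv_mul_eq_div]
  rw [eval_eq]
  refine ⟨div_nonneg (Finset.sum_nonneg fun i _ => ?_) (Nat.cast_nonneg L),
    div_le_of_le_mul₀ (Nat.cast_nonneg L) ?_ ?_⟩
  · exact sub_nonneg.2 (pow_le_one₀ h0 h1)
  · exact sub_nonneg.2 (pow_le_one₀ h0 h1)
  · refine (Finset.sum_le_card_nsmul _ _ (1 - y ^ L) fun i hi => ?_).trans_eq (by simp [mul_comm])
    exact sub_le_sub_left (pow_le_pow_of_le_one h0 h1 (Finset.mem_range.1 hi).le) 1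

lemma pow_mul_eval_averageDefect_pow_le {K m s : ℕ} (hs : K * L * m ≤ s) :
    y ^ s * (averageDefect L).eval y ^ K ≤ (1 / (m + 1)) ^ K := by
  obtain ⟨q_nonneg, q_le⟩ := eval_averageDefect_mem_Icc (L := L) h0 h1
  calc y ^ s * (averageDefect L).eval y ^ K
    _ ≤ y ^ (K * L * m) * (1 - y ^ L) ^ K :=
        mul_le_mul (pow_le_pow_of_le_one h0 h1 hs) (pow_le_pow_left₀ q_nonneg q_le K)
          (pow_nonneg q_nonneg K) (pow_nonneg h0 _)
    _ = ((y ^ L) ^ m * (1 - y ^ L)) ^ K := by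
        rw [mul_pow, ← pow_mul, ← pow_mul, show K * L * m = L * (m * K) by ring]
    _ ≤ (1 / (m + 1)) ^ K :=
        pow_le_pow_left₀ (mul_nonneg (by positivity) (q_nonneg.trans q_le))
          (pow_mul_one_sub_le (pow_nonneg h0 L) (pow_le_one₀ h0 h1) m) K

lemma abs_pow_mul_one_sub_pow_sub_le {K m s : ℕ} (r : ℕ) (hs : K * L * m ≤ s) :
    |y ^ s * (1 - y) ^ r - y ^ s * ((1 - y) * (1 - (averageDefect L).eval y ^ K)) ^ r| ≤
      r * (1 / (m + 1)) ^ K := by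
  obtain ⟨q_nonneg, q_le⟩ := eval_averageDefect_mem_Icc (L := L) h0 h1
  set e := (averageDefect L).eval y ^ K
  have e_nonneg : 0 ≤ e := pow_nonneg q_nonneg K
  have e_le : e ≤ 1 := pow_le_one₀ q_nonneg (q_le.trans (sub_le_self 1 (pow_nonneg h0 L)))
  have bernoulli : 1 - (1 - e) ^ r ≤ r * e := by
    have := one_add_mul_le_pow (a := -e) (by linarith) r
    rw [← sub_eq_add_neg] at this
    linarith
  have factored : y ^ s * (1 - y) ^ r - y ^ s * ((1 - y) * (1 - e)) ^ r =
      y ^ s * (1 - y) ^ r * (1 - (1 - e) ^ r) := by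
    rw [mul_pow]
    ring
  have pow_le : (1 - e) ^ r ≤ 1 := pow_le_one₀ (by linarith) (by linarith)
  rw [factored, abs_of_nonneg (mul_nonneg
    (mul_nonneg (pow_nonneg h0 s) (pow_nonneg (by linarith) r)) (by linarith))]
  calc y ^ s * (1 - y) ^ r * (1 - (1 - e) ^ r) ≤ y ^ s * (r * e) :=
        mul_le_mul (mul_le_of_le_one_right (pow_nonneg h0 s) (pow_le_one₀ (by linarith)
          (by linarith))) bernoulli (by linarith) (pow_nonneg h0 s)
    _ = r * (y ^ s * e) := by ring
    _ ≤ r * (1 / (m + 1)) ^ K := by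
        gcongr
        exact pow_mul_eval_averageDefect_pow_le h0 h1 hs

end AverageDefect

section PowerSum

/-- The left shift on bounded real sequences. -/
noncomputable def shift : (ℕ →ᵇ ℝ) →L[ℝ] (ℕ →ᵇ ℝ) :=
  BoundedContinuousFunction.compContinuousCLM ℝ ℝ ⟨(· + 1), continuous_of_discreteTopology⟩

lemma norm_shift_le : ‖shift‖ ≤ 1 :=
  ContinuousLinearMap.opNorm_le_bound _ zero_le_one fun Γ => by
    rw [one_mul]
    exact (BoundedContinuousFunction.norm_le (norm_nonneg Γ)).2 fun s => Γ.norm_coe_le_norm (s + 1)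

lemma shift_pow_apply (Γ : ℕ →ᵇ ℝ) (n s : ℕ) : (shift ^ n) Γ s = Γ (s + n) := by
  induction n generalizing s with
  | zero => rfl
  | succ n ih =>
    rw [pow_succ', mul_apply_eq_comp]
    exact (ih (s + 1)).trans (by rw [add_right_comm, add_assoc])

variable {ι : Type*} [Fintype ι] {W y : ι → ℝ}

lemma aeval_shift_apply {Γ : ℕ →ᵇ ℝ} (hΓ : ∀ s, Γ s = ∑ i, W i * y i ^ s) (p : ℝ[X]) (s : ℕ) :
    aeval shift p Γ s = ∑ i, W i * (y i ^ s * p.eval (y i)) := by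
  induction p using Polynomial.induction_on' with
  | add p q hp hq => simp [hp, hq, mul_add, Finset.sum_add_distrib]
  | monomial n a =>
    simp only [aeval_monomial, Algebra.algebraMap_eq_smul_one, smul_mul_assoc, one_mul,
      smul_apply, BoundedContinuousFunction.coe_smul, shift_pow_apply, hΓ,
      smul_eq_mul, Finset.mul_sum, eval_monomial]
    exact Finset.sum_congr rfl fun i _ => by ring

lemma abs_sum_mul_pow_mul_eval_le (hW : ∀ s : ℕ, |∑ i, W i * y i ^ s| ≤ 1) (p : ℝ[X]) (s : ℕ) :
    |∑ i, W i * (y i ^ s * p.eval (y i))| ≤ ‖aeval shift p‖ := by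
  let Γ : ℕ →ᵇ ℝ := .ofNormedAddCommGroupDiscrete (fun s => ∑ i, W i * y i ^ s) 1 hW
  have norm_le : ‖Γ‖ ≤ 1 := (BoundedContinuousFunction.norm_le zero_le_one).2 hW
  rw [← aeval_shift_apply (Γ := Γ) (fun _ => rfl)]
  exact ((aeval shift p Γ).norm_coe_le_norm s).trans
    ((aeval shift p).le_of_opNorm_le_of_le le_rfl norm_le |>.trans_eq (mul_one _))

/-- Truncating `(1 - y) ^ r` to a polynomial with small value at the shift costs only an error
weighted by `y ^ s`, which beats the `ℓ¹` mass `Λ`. -/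
lemma abs_sum_mul_pow_mul_one_sub_pow_le {Λ : ℝ} (hΛ : ∑ i, |W i| ≤ Λ)
    (hy : ∀ i, y i ∈ Icc (0 : ℝ) 1) (hW : ∀ s : ℕ, |∑ i, W i * y i ^ s| ≤ 1)
    {K L m s : ℕ} (hL : L ≠ 0) (hs : K * L * m ≤ s) (r : ℕ) :
    |∑ i, W i * (y i ^ s * (1 - y i) ^ r)| ≤
      (2 ^ (K + 1) / L) ^ r + Λ * (r * (1 / (m + 1)) ^ K) := by
  have : Nontrivial (ℕ →ᵇ ℝ) := NormOneClass.nontrivial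
  obtain ⟨p, eval_p, norm_p_le⟩ : ∃ p : ℝ[X],
      (∀ v, p.eval v = ((1 - v) * (1 - (averageDefect L).eval v ^ K)) ^ r) ∧
      ‖aeval shift p‖ ≤ (2 ^ (K + 1) / L) ^ r :=
    ⟨((1 - X) * (1 - averageDefect L ^ K)) ^ r, fun v => by simp,
      norm_aeval_one_sub_X_mul_pow_le (x := shift) hL K norm_shift_le r⟩
  have main_le := (abs_sum_mul_pow_mul_eval_le hW p s).trans norm_p_le
  have error_le : |∑ i, W i * (y i ^ s * (1 - y i) ^ r) -
      ∑ i, W i * (y i ^ s * p.eval (y i))| ≤ Λ * (r * (1 / (m + 1)) ^ K) := by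
    calc _ ≤ ∑ i, |W i| * (r * (1 / (m + 1)) ^ K) := by
          rw [← Finset.sum_sub_distrib]
          refine (Finset.abs_sum_le_sum_abs _ _).trans (Finset.sum_le_sum fun i _ => ?_)
          rw [← mul_sub, abs_mul, eval_p]
          exact mul_le_mul_of_nonneg_left
            (abs_pow_mul_one_sub_pow_sub_le (hy i).1 (hy i).2 r hs) (abs_nonneg _)
      _ ≤ Λ * (r * (1 / (m + 1)) ^ K) := by
          rw [← Finset.sum_mul]
          gcongr
  linarith [abs_sub_abs_le_abs_sub (∑ i, W i * (y i ^ s * (1 - y i) ^ r))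
    (∑ i, W i * (y i ^ s * p.eval (y i)))]

end PowerSum

-- Rates of the differences

section Rates

/-- The constant in the bound of order `b ^ (-3 * r)` for the `r`-th difference of a power sum
whose `ℓ¹` mass is at most `A * b ^ p`. -/
noncomputable def powerSumConst (A : ℝ) (p r : ℕ) : ℝ :=
  2 ^ ((p + 3 * r + 1) * r) + A * r * (4 * (p + 3 * r)) ^ (p + 3 * r)

lemma powerSumConst_nonneg {A : ℝ} (hA : 0 ≤ A) (p r : ℕ) : 0 ≤ powerSumConst A p r := by
  unfold powerSumConst
  positivity

lemma abs_sum_mul_pow_mul_one_sub_pow_le_div {ι : Type*} [Fintype ι] {W y : ι → ℝ} {A : ℝ}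
    {b p r s : ℕ} (hW : ∑ i, |W i| ≤ A * b ^ p) (hy : ∀ i, y i ∈ Icc (0 : ℝ) 1)
    (hWy : ∀ s : ℕ, |∑ i, W i * y i ^ s| ≤ 1) (hb : b ≠ 0) (hr : r ≠ 0) (hs : b ^ 4 ≤ 4 * s) :
    |∑ i, W i * (y i ^ s * (1 - y i) ^ r)| ≤ powerSumConst A p r / b ^ (3 * r) := by
  set K := p + 3 * r with hK
  have K_pos : 0 < K := by lia
  set m := b / (4 * K)
  have exponent_le : K * b ^ 3 * m ≤ s := by
    have four_le : 4 * (K * b ^ 3 * m) ≤ b ^ 4 :=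
      calc 4 * (K * b ^ 3 * m) = b ^ 3 * (4 * K * m) := by ring
        _ ≤ b ^ 3 * b := Nat.mul_le_mul_left _ (Nat.mul_div_le b (4 * K))
    lia
  have inv_le : 1 / ((m : ℝ) + 1) ≤ 4 * K / b := by
    rw [div_le_div_iff₀ (by positivity) (by positivity), one_mul]
    exact_mod_cast (Nat.lt_mul_div_succ b (by lia : 0 < 4 * K)).le
  have mass_nonneg : 0 ≤ A * b ^ p := (Finset.sum_nonneg fun i _ => abs_nonneg (W i)).trans hW
  calc |∑ i, W i * (y i ^ s * (1 - y i) ^ r)|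
    _ ≤ (2 ^ (K + 1) / (b ^ 3 : ℕ)) ^ r + A * b ^ p * (r * (1 / (m + 1)) ^ K) :=
        abs_sum_mul_pow_mul_one_sub_pow_le hW hy hWy (pow_ne_zero 3 hb) exponent_le r
    _ ≤ (2 ^ (K + 1) / (b ^ 3 : ℕ)) ^ r + A * b ^ p * (r * (4 * K / b) ^ K) := by gcongr
    _ = powerSumConst A p r / b ^ (3 * r) := by
        rw [powerSumConst, hK, div_pow, div_pow, pow_add (b : ℝ) p, pow_mul (2 : ℝ),
          pow_mul (b : ℝ) 3]
        push_cast
        field_simp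

lemma exists_pow_four_le_and_le {n : ℕ} (hn : n ≠ 0) :
    ∃ b : ℕ, b ≠ 0 ∧ b ^ 4 ≤ n ∧ n ≤ 16 * b ^ 4 := by
  set c := n.sqrt
  have sqrt_pos : 0 < c.sqrt := Nat.sqrt_pos.2 (Nat.sqrt_pos.2 (Nat.pos_of_ne_zero hn))
  refine ⟨c.sqrt, sqrt_pos.ne', ?_, ?_⟩
  · calc c.sqrt ^ 4 = (c.sqrt ^ 2) ^ 2 := by ring
      _ ≤ c ^ 2 := Nat.pow_le_pow_left c.sqrt_le' 2
      _ ≤ n := n.sqrt_le'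
  · have succ_le : c + 1 ≤ (2 * c.sqrt) ^ 2 :=
      calc c + 1 ≤ (c.sqrt + 1) ^ 2 := c.lt_succ_sqrt'
        _ ≤ (2 * c.sqrt) ^ 2 := Nat.pow_le_pow_left (by lia) 2
    calc n ≤ (c + 1) ^ 2 := n.lt_succ_sqrt'.le
      _ ≤ ((2 * c.sqrt) ^ 2) ^ 2 := Nat.pow_le_pow_left succ_le 2
      _ = 16 * c.sqrt ^ 4 := by ring

/-- The constant in the bound on the `r`-th difference of a smoothed version of the probabilities
`k ↦ F ^ k (Iic b)` on `ℝ^d`. -/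
noncomputable def differenceConst (d r : ℕ) : ℝ := 8 ^ r * powerSumConst (8192 ^ d) (12 * d) r

lemma differenceConst_nonneg (d r : ℕ) : 0 ≤ differenceConst d r :=
  mul_nonneg (by positivity) (powerSumConst_nonneg (by positivity) _ _)

lemma abs_sum_mul_pow_mul_one_sub_pow_le_differenceConst {ι : Type*} [Fintype ι] {W y : ι → ℝ}
    {d n r s : ℕ} (hW : ∑ i, |W i| ≤ ((n : ℝ) ^ 3 + 1) ^ d) (hy : ∀ i, y i ∈ Icc (0 : ℝ) 1)
    (hWy : ∀ s : ℕ, |∑ i, W i * y i ^ s| ≤ 1) (hn : n ≠ 0) (hr : r ≠ 0) (hs : n ≤ 4 * s) :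
    |∑ i, W i * (y i ^ s * (1 - y i) ^ r)| ≤ differenceConst d r / √√n ^ (3 * r) := by
  obtain ⟨b, hb, le_n, n_le⟩ := exists_pow_four_le_and_le hn
  have one_le_b : (1 : ℝ) ≤ b := by exact_mod_cast Nat.one_le_iff_ne_zero.2 hb
  have n_le' : (n : ℝ) ≤ 16 * b ^ 4 := by exact_mod_cast n_le
  have sqrt_le : √n ≤ (2 * b) ^ 2 :=
    Real.sqrt_le_iff.2 ⟨by positivity, n_le'.trans_eq (by ring)⟩
  have sqrt_sqrt_le : √√n ≤ 2 * b := Real.sqrt_le_iff.2 ⟨by positivity, sqrt_le⟩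
  have mass_le : ∑ i, |W i| ≤ 8192 ^ d * (b : ℝ) ^ (12 * d) :=
    calc ∑ i, |W i| ≤ ((16 * (b : ℝ) ^ 4) ^ 3 + (16 * (b : ℝ) ^ 4) ^ 3) ^ d :=
          hW.trans (by gcongr; exact one_le_pow₀ (by linarith [one_le_pow₀ one_le_b (n := 4)]))
      _ = 8192 ^ d * (b : ℝ) ^ (12 * d) := by
          rw [pow_mul, ← mul_pow]
          ring
  calc |∑ i, W i * (y i ^ s * (1 - y i) ^ r)|
      ≤ powerSumConst (8192 ^ d) (12 * d) r / b ^ (3 * r) :=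
        abs_sum_mul_pow_mul_one_sub_pow_le_div mass_le hy hWy hb hr (le_n.trans (by lia))
    _ = differenceConst d r / (2 * b) ^ (3 * r) := by
        rw [differenceConst, mul_pow, pow_mul 2, mul_div_mul_comm]
        norm_num
    _ ≤ differenceConst d r / √√n ^ (3 * r) :=
        div_le_div_of_nonneg_left (differenceConst_nonneg d r) (by positivity)
          (pow_le_pow_left₀ (Real.sqrt_nonneg _) sqrt_sqrt_le _)

variable {κ : Type*} [Fintype κ]

lemma exists_smooth_approx_convPow (F : Measure (κ → ℝ)) [IsProbabilityMeasure F]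
    [F.IsNegInvariant] (b : κ → ℝ) {n : ℕ} (hn : n ≠ 0) :
    ∃ Γ : ℕ → ℝ,
      (∀ s : ℕ, |Γ s - (convPow F (2 * s)).real (Iic b)| ≤ (2 * s) ^ 2 / n ^ 3) ∧
      (∀ s, n ≤ 4 * s → |Γ (s + 1) - Γ s| ≤ differenceConst (Fintype.card κ) 1 / √n) ∧
      ∀ s, n ≤ 4 * s → |(Γ (s + 2) - Γ (s + 1)) - (Γ (s + 1) - Γ s)| ≤
        differenceConst (Fintype.card κ) 2 / (n * √n) := by
  have : NeZero (n ^ 3) := ⟨pow_ne_zero 3 hn⟩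
  obtain ⟨W, y, mass_le, abs_y_le, mem_Icc, approx⟩ :=
    exists_powerSum_approx_convPow F b (n ^ 3)
  have sq_mem (A) : y A ^ 2 ∈ Icc (0 : ℝ) 1 :=
    ⟨sq_nonneg _, (sq_le_one_iff_abs_le_one _).2 (abs_y_le A)⟩
  have bounded (s : ℕ) : |∑ A, W A * (y A ^ 2) ^ s| ≤ 1 := by
    simp only [← pow_mul]
    exact abs_le.2 ⟨by linarith [(mem_Icc (2 * s)).1], (mem_Icc (2 * s)).2⟩
  have one_le_sqrt : 1 ≤ √√(n : ℝ) :=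
    Real.one_le_sqrt.2 (Real.one_le_sqrt.2 (by exact_mod_cast Nat.one_le_iff_ne_zero.2 hn))
  have rate {s : ℕ} (hs : n ≤ 4 * s) {r : ℕ} (hr : r ≠ 0) :=
    abs_sum_mul_pow_mul_one_sub_pow_le_differenceConst (by simpa using mass_le) sq_mem bounded
      hn hr hs
  refine ⟨fun s => ∑ A, W A * (y A ^ 2) ^ s, fun s => ?_, fun s hs => ?_, fun s hs => ?_⟩
  · simpa [← pow_mul] using approx (2 * s)
  · rw [abs_sub_comm, ← Finset.sum_sub_distrib]
    calc _ = |∑ A, W A * ((y A ^ 2) ^ s * (1 - y A ^ 2) ^ 1)| :=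
          congrArg abs (Finset.sum_congr rfl fun A _ => by ring)
      _ ≤ differenceConst (Fintype.card κ) 1 / √√n ^ (3 * 1) := rate hs one_ne_zero
      _ ≤ differenceConst (Fintype.card κ) 1 / √√n ^ 2 :=
          div_le_div_of_nonneg_left (differenceConst_nonneg _ _) (by positivity)
            (pow_le_pow_right₀ one_le_sqrt (by norm_num))
      _ = differenceConst (Fintype.card κ) 1 / √n := by rw [Real.sq_sqrt (Real.sqrt_nonneg _)]
  · simp only [← Finset.sum_sub_distrib]
    calc _ = |∑ A, W A * ((y A ^ 2) ^ s * (1 - y A ^ 2) ^ 2)| :=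
          congrArg abs (Finset.sum_congr rfl fun A _ => by ring)
      _ ≤ differenceConst (Fintype.card κ) 2 / √√n ^ (3 * 2) := rate hs two_ne_zero
      _ = differenceConst (Fintype.card κ) 2 / (n * √n) := by
          congr 1
          rw [mul_comm, pow_mul, Real.sq_sqrt (Real.sqrt_nonneg _), pow_succ,
            Real.sq_sqrt n.cast_nonneg]

end Rates

-- Linear approximation near the exponent `n`

section DiscreteTaylor

variable {f : ℕ → ℝ} {c : ℝ} {m n : ℕ}

lemma abs_sub_le_mul_abs_sub
    (hf : ∀ k ∈ Ico (min m n) (max m n), |f (k + 1) - f k| ≤ c) :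
    |f n - f m| ≤ c * |(n : ℝ) - m| := by
  wlog hmn : m ≤ n generalizing m n
  · rw [abs_sub_comm, abs_sub_comm (n : ℝ)]
    exact this (by rwa [min_comm, max_comm]) (le_of_not_ge hmn)
  rw [min_eq_left hmn, max_eq_right hmn] at hf
  have dist_le := dist_le_Ico_sum_of_dist_le (f := f) (d := fun _ => c) hmn fun {k} hmk hkn => by
    rw [dist_comm, Real.dist_eq]
    exact hf k ⟨hmk, hkn⟩
  rw [Finset.sum_const, Nat.card_Ico, nsmul_eq_mul, Nat.cast_sub hmn, dist_comm,
    Real.dist_eq] at dist_le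
  rwa [abs_of_nonneg (sub_nonneg.2 (Nat.cast_le.2 hmn)), mul_comm]

lemma abs_sub_sub_mul_le_mul_sq {a : ℕ} (hm : a ≤ m) (hn : a ≤ n)
    (hf : ∀ k, a ≤ k → |(f (k + 2) - f (k + 1)) - (f (k + 1) - f k)| ≤ c) :
    |f n - f m - (n - m) * (f (m + 1) - f m)| ≤ c * ((n : ℝ) - m) ^ 2 := by
  have c_nonneg : 0 ≤ c := (abs_nonneg _).trans (hf a le_rfl)
  have difference_le (k) (hk : k ∈ Ico (min m n) (max m n)) :
      |(f (k + 1) - f k) - (f (m + 1) - f m)| ≤ c * |(n : ℝ) - m| := by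
    have hak : a ≤ k := (le_min hm hn).trans hk.1
    calc |(f (k + 1) - f k) - (f (m + 1) - f m)| ≤ c * |(k : ℝ) - m| :=
          abs_sub_le_mul_abs_sub (f := fun k => f (k + 1) - f k) fun j hj =>
            hf j ((le_min hm hak).trans hj.1)
      _ ≤ c * |(n : ℝ) - m| :=
          mul_le_mul_of_nonneg_left (abs_sub_left_of_mem_uIcc ⟨by
            exact_mod_cast hk.1, by exact_mod_cast hk.2.le⟩) c_nonneg
  have remainder_le := abs_sub_le_mul_abs_sub (c := c * |(n : ℝ) - m|)
    (f := fun k => f k - k * (f (m + 1) - f m)) fun k hk =>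
      (congrArg abs (by push_cast; ring)).trans_le (difference_le k hk)
  rw [mul_assoc, abs_mul_abs_self, ← pow_two] at remainder_le
  exact (congrArg abs (by ring)).trans_le remainder_le

lemma natCast_succ_div_two_sub_mem_Icc (k : ℕ) :
    (((k + 1) / 2 : ℕ) : ℝ) - k / 2 ∈ Icc (0 : ℝ) (1 / 2) := by
  have lower : (k : ℝ) ≤ 2 * ((k + 1) / 2 : ℕ) := by exact_mod_cast (by lia)
  have upper : (2 : ℝ) * ((k + 1) / 2 : ℕ) ≤ k + 1 := by exact_mod_cast (by lia)
  constructor <;> linarith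

lemma abs_sub_sub_mul_half_le {a : ℕ} {c₁ : ℝ} (hm : a ≤ (m + 1) / 2) (hn : a ≤ (n + 1) / 2)
    (hf₁ : |f ((m + 1) / 2 + 1) - f ((m + 1) / 2)| ≤ c₁)
    (hf₂ : ∀ k, a ≤ k → |(f (k + 2) - f (k + 1)) - (f (k + 1) - f k)| ≤ c) :
    |f ((n + 1) / 2) - f ((m + 1) / 2) - (n - m) * ((f ((m + 1) / 2 + 1) - f ((m + 1) / 2)) / 2)| ≤
      c₁ / 2 + c * (1 + ((n : ℝ) - m) ^ 2) := by
  have taylor := abs_sub_sub_mul_le_mul_sq hm hn hf₂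
  have c_nonneg : 0 ≤ c := (abs_nonneg _).trans (hf₂ a le_rfl)
  obtain ⟨m_lower, m_upper⟩ := natCast_succ_div_two_sub_mem_Icc m
  obtain ⟨n_lower, n_upper⟩ := natCast_succ_div_two_sub_mem_Icc n
  set s := (m + 1) / 2
  set t := (n + 1) / 2
  set D := f (s + 1) - f s
  have rounding_le : |(t : ℝ) - s - (n - m) / 2| ≤ 1 / 2 := by
    rw [abs_le]
    constructor <;> linarith
  have sq_le : ((t : ℝ) - s) ^ 2 ≤ 1 + (n - m) ^ 2 := by
    nlinarith [sq_abs ((t : ℝ) - s - (n - m) / 2), abs_nonneg ((t : ℝ) - s - (n - m) / 2),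
      sq_nonneg ((t : ℝ) - s - (n - m))]
  calc |f t - f s - (n - m) * (D / 2)|
      = |(t - s - (n - m) / 2) * D + (f t - f s - (t - s) * D)| := by ring_nf
    _ ≤ 1 / 2 * c₁ + c * ((t : ℝ) - s) ^ 2 := by
        refine (abs_add_le _ _).trans (add_le_add ?_ taylor)
        rw [abs_mul]
        exact mul_le_mul rounding_le hf₁ (abs_nonneg _) (by norm_num)
    _ ≤ c₁ / 2 + c * (1 + ((n : ℝ) - m) ^ 2) := by
        rw [one_div_mul_eq_div]
        gcongr

end DiscreteTaylor

section LinearApproximation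

variable {κ : Type*} [Fintype κ] (F : Measure (κ → ℝ)) [IsProbabilityMeasure F]
  [F.IsNegInvariant] (b : κ → ℝ) {n : ℕ}

lemma abs_convPow_sub_smooth_le {Γ : ℕ → ℝ} (hn : n ≠ 0)
    (hΓ : ∀ s : ℕ, |Γ s - (convPow F (2 * s)).real (Iic b)| ≤ (2 * s) ^ 2 / n ^ 3) {k : ℕ}
    (hk : 2 * |(k : ℝ) - n| ≤ n) :
    |(convPow F k).real (Iic b) - Γ ((k + 1) / 2)| ≤ (2 * Fintype.card κ + 9) / √n := by
  set p : ℕ → ℝ := fun k => (convPow F k).real (Iic b)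
  set s := (k + 1) / 2
  have n_pos : (0 : ℝ) < n := by positivity
  have one_le_n : (1 : ℝ) ≤ n := by exact_mod_cast Nat.one_le_iff_ne_zero.2 hn
  obtain ⟨k_ge, k_le⟩ := abs_le.1 (show |(k : ℝ) - n| ≤ n / 2 by linarith)
  have round_le : |p k - p (2 * s)| ≤ 2 * Fintype.card κ / √n := by
    obtain two_s_eq | two_s_eq : 2 * s = k ∨ 2 * s = k + 1 := by lia
    · rw [two_s_eq, sub_self, abs_zero]
      positivity
    · have sqrt_le : √n / 2 ≤ √((k : ℝ) + 1) := by
        apply Real.le_sqrt_of_sq_le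
        rw [div_pow, Real.sq_sqrt n_pos.le]
        linarith
      rw [two_s_eq, abs_sub_comm]
      calc |p (k + 1) - p k| ≤ Fintype.card κ / √(k + 1) := abs_convPow_succ_sub_le F b k
        _ ≤ Fintype.card κ / (√n / 2) :=
            div_le_div_of_nonneg_left (by positivity) (by positivity) sqrt_le
        _ = 2 * Fintype.card κ / √n := by field_simp
  have smooth_le : |Γ s - p (2 * s)| ≤ 9 / √n := by
    have two_s_le : (2 * s : ℝ) ≤ 3 * n := by
      have : (2 * s : ℝ) ≤ k + 1 := by exact_mod_cast Nat.mul_div_le (k + 1) 2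
      linarith
    calc |Γ s - p (2 * s)| ≤ (2 * s) ^ 2 / n ^ 3 := hΓ s
      _ ≤ (3 * n) ^ 2 / n ^ 3 := by gcongr
      _ = 9 / n := by field_simp; norm_num
      _ ≤ 9 / √n := by
          gcongr
          exact Real.sqrt_le_self_iff.2 (Or.inr one_le_n)
  calc |p k - Γ s| ≤ |p k - p (2 * s)| + |p (2 * s) - Γ s| := abs_sub_le _ _ _
    _ ≤ 2 * Fintype.card κ / √n + 9 / √n :=
        add_le_add round_le ((abs_sub_comm _ _).trans_le smooth_le)
    _ = (2 * Fintype.card κ + 9) / √n := by rw [add_div]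

/-- The constant in the linear approximation of `k ↦ F ^ k (Iic b)` on `ℝ^d`. -/
noncomputable def linearApproxConst (d : ℕ) : ℝ :=
  4 * d + 18 + differenceConst d 1 + differenceConst d 2

lemma linearApproxConst_pos (d : ℕ) : 0 < linearApproxConst d := by
  have first_nonneg := differenceConst_nonneg d 1
  have second_nonneg := differenceConst_nonneg d 2
  unfold linearApproxConst
  positivity

lemma four_add_le_linearApproxConst (d : ℕ) :
    4 + 2 * (differenceConst d 1 / 2) ≤ linearApproxConst d := by
  rw [linearApproxConst]
  linarith [differenceConst_nonneg d 2, d.cast_nonneg (α := ℝ)]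

lemma rates_le_linearApproxConst (d : ℕ) {N : ℝ} (hN : 1 ≤ N) (x : ℝ) :
    (2 * d + 9) / √N + (2 * d + 9) / √N +
        (differenceConst d 1 / √N / 2 + differenceConst d 2 / (N * √N) * (1 + x ^ 2)) ≤
      linearApproxConst d / √N * (1 + x ^ 2 / N) := by
  have first_nonneg := differenceConst_nonneg d 1
  have second_nonneg := differenceConst_nonneg d 2
  have inv_le_one : 1 / N ≤ 1 := (div_le_one (by positivity)).2 hN
  have q_nonneg : 0 ≤ x ^ 2 / N := by positivity
  calc _ = (4 * d + 18 + differenceConst d 1 / 2 +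
          differenceConst d 2 * (1 / N + x ^ 2 / N)) / √N := by
        field_simp
        ring
    _ ≤ (4 * d + 18 + differenceConst d 1 + differenceConst d 2) * (1 + x ^ 2 / N) / √N := by
        have : (0 : ℝ) ≤ d := d.cast_nonneg
        gcongr
        nlinarith
    _ = linearApproxConst d / √N * (1 + x ^ 2 / N) := by rw [linearApproxConst, div_mul_eq_mul_div]

lemma abs_sub_mul_le_of_le_two_mul_abs {u x D c N : ℝ} (hN : 1 ≤ N) (hu : |u| ≤ 1)
    (hD : |D| ≤ c / √N) (hx : N ≤ 2 * |x|) : |u - x * D| ≤ (4 + 2 * c) / √N * (x ^ 2 / N) := by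
  have N_pos : 0 < N := one_pos.trans_le hN
  have : 0 ≤ c / √N := (abs_nonneg D).trans hD
  have abs_x_le : |x| ≤ 2 * (x ^ 2 / N) := by
    rw [← sq_abs, mul_div_assoc', le_div_iff₀ N_pos]
    nlinarith [abs_nonneg x]
  have one_le : 1 ≤ 4 / √N * (x ^ 2 / N) := by
    calc 1 ≤ 4 / N * (x ^ 2 / N) := by
          rw [← sq_abs, div_mul_div_comm, le_div_iff₀ (by positivity)]
          nlinarith
      _ ≤ 4 / √N * (x ^ 2 / N) := by
          gcongr
          exact Real.sqrt_le_self_iff.2 (Or.inr hN)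
  calc |u - x * D| ≤ |u| + |x| * |D| := (abs_sub _ _).trans_eq (by rw [abs_mul])
    _ ≤ 4 / √N * (x ^ 2 / N) + 2 * (x ^ 2 / N) * (c / √N) := by gcongr; exact hu.trans one_le
    _ = (4 + 2 * c) / √N * (x ^ 2 / N) := by ring

lemma exists_linear_approx_convPow (hn : n ≠ 0) :
    ∃ D : ℝ, ∀ k : ℕ,
      |(convPow F k).real (Iic b) - (convPow F n).real (Iic b) - (k - n) * D| ≤
        linearApproxConst (Fintype.card κ) / √n * (1 + (k - n) ^ 2 / n) := by
  obtain ⟨Γ, approx, first_le, second_le⟩ := exists_smooth_approx_convPow F b hn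
  set p : ℕ → ℝ := fun k => (convPow F k).real (Iic b)
  set m := (n + 1) / 2
  set C₁ := differenceConst (Fintype.card κ) 1
  set C₂ := differenceConst (Fintype.card κ) 2
  have first_le_m : |Γ (m + 1) - Γ m| ≤ C₁ / √n := first_le m (by lia)
  have one_le_n : (1 : ℝ) ≤ n := by exact_mod_cast Nat.one_le_iff_ne_zero.2 hn
  refine ⟨(Γ (m + 1) - Γ m) / 2, fun k => ?_⟩
  obtain near | far := le_total (2 * |(k : ℝ) - n|) n
  · have n_le : n ≤ 4 * ((k + 1) / 2) := by
      have : (n : ℝ) ≤ 2 * k := by linarith [neg_abs_le ((k : ℝ) - n)]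
      have : n ≤ 2 * k := by exact_mod_cast this
      lia
    have taylor := abs_sub_sub_mul_half_le (m := n) (n := k) (a := (n + 3) / 4) (by lia) (by lia)
      first_le_m fun s hs => second_le s (by lia)
    have smooth_k := abs_convPow_sub_smooth_le F b hn approx near
    have smooth_n := abs_convPow_sub_smooth_le F b hn approx (k := n) (by simp)
    calc |p k - p n - (k - n) * ((Γ (m + 1) - Γ m) / 2)|
        = |p k - Γ ((k + 1) / 2) - (p n - Γ m) +
            (Γ ((k + 1) / 2) - Γ m - (k - n) * ((Γ (m + 1) - Γ m) / 2))| := by ring_nf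
      _ ≤ (2 * Fintype.card κ + 9) / √n + (2 * Fintype.card κ + 9) / √n +
            (C₁ / √n / 2 + C₂ / (n * √n) * (1 + ((k : ℝ) - n) ^ 2)) :=
          (abs_add_le _ _).trans (add_le_add ((abs_sub _ _).trans (add_le_add smooth_k smooth_n))
            taylor)
      _ ≤ linearApproxConst (Fintype.card κ) / √n * (1 + (k - n) ^ 2 / n) :=
          rates_le_linearApproxConst _ one_le_n _
  · have half_le : |(Γ (m + 1) - Γ m) / 2| ≤ C₁ / 2 / √n := by
      rw [abs_div, abs_two, div_right_comm]
      gcongr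
    calc |p k - p n - (k - n) * ((Γ (m + 1) - Γ m) / 2)|
        ≤ (4 + 2 * (C₁ / 2)) / √n * ((k - n) ^ 2 / n) :=
          abs_sub_mul_le_of_le_two_mul_abs one_le_n
            (abs_sub_le_of_le_of_le measureReal_nonneg measureReal_le_one measureReal_nonneg
              measureReal_le_one |>.trans_eq (sub_zero 1)) half_le far
      _ ≤ linearApproxConst (Fintype.card κ) / √n * (1 + (k - n) ^ 2 / n) := by
          have const_nonneg := (linearApproxConst_pos (Fintype.card κ)).le
          have coeff_le := four_add_le_linearApproxConst (Fintype.card κ)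
          gcongr
          linarith

end LinearApproximation

-- Poisson averaging

section Poisson

/-- The mass `e^{-r} r^k / k!` of the Poisson distribution with mean `r` at `k`. -/
noncomputable def poissonWeight (r : ℝ) (k : ℕ) : ℝ := Real.exp (-r) * r ^ k / k.factorial

variable {r : ℝ}

lemma poissonWeight_nonneg (hr : 0 ≤ r) (k : ℕ) : 0 ≤ poissonWeight r k := by
  unfold poissonWeight
  positivity

lemma hasSum_poissonWeight (r : ℝ) : HasSum (poissonWeight r) 1 := by
  have exp_series := (NormedSpace.expSeries_div_hasSum_exp (𝔸 := ℝ) r).mul_left (Real.exp (-r))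
  rw [← Real.exp_eq_exp_ℝ, ← Real.exp_add, neg_add_cancel, Real.exp_zero] at exp_series
  exact exp_series.congr_fun fun k => by rw [poissonWeight, mul_div_assoc]

lemma poissonWeight_add_mul_descFactorial (r : ℝ) (k j : ℕ) :
    poissonWeight r (k + j) * (k + j).descFactorial j = r ^ j * poissonWeight r k := by
  have factorial_eq : ((k + j).factorial : ℝ) = k.factorial * (k + j).descFactorial j := by
    exact_mod_cast (by simpa using (Nat.factorial_mul_descFactorial (Nat.le_add_left j k)).symm)
  have descFactorial_ne_zero : ((k + j).descFactorial j : ℝ) ≠ 0 := by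
    exact_mod_cast (Nat.pos_of_ne_zero (by simp [Nat.descFactorial_eq_zero_iff_lt])).ne'
  rw [poissonWeight, poissonWeight, factorial_eq, pow_add]
  field_simp

lemma hasSum_poissonWeight_mul_descFactorial (r : ℝ) (j : ℕ) :
    HasSum (fun k => poissonWeight r k * k.descFactorial j) (r ^ j) := by
  have initial_zero : ∑ k ∈ Finset.range j, poissonWeight r k * k.descFactorial j = 0 :=
    Finset.sum_eq_zero fun k hk => by
      rw [Nat.descFactorial_of_lt (Finset.mem_range.1 hk), Nat.cast_zero, mul_zero]
  rw [← hasSum_nat_add_iff' j, initial_zero, sub_zero]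
  simpa only [poissonWeight_add_mul_descFactorial, mul_one] using
    (hasSum_poissonWeight r).mul_left (r ^ j)

lemma hasSum_poissonWeight_mul_quadratic (r α β γ : ℝ) :
    HasSum (fun k : ℕ => poissonWeight r k * (α + γ * (k - r) + β * (k - r) ^ 2))
      (α + β * r) := by
  have total := (hasSum_poissonWeight r).mul_right (α - γ * r + β * r ^ 2)
  have mean := (hasSum_poissonWeight_mul_descFactorial r 1).mul_right (γ + β * (1 - 2 * r))
  have second := (hasSum_poissonWeight_mul_descFactorial r 2).mul_right β
  have value_eq : 1 * (α - γ * r + β * r ^ 2) + r ^ 1 * (γ + β * (1 - 2 * r)) + r ^ 2 * β =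
      α + β * r := by ring
  rw [← value_eq]
  refine ((total.add mean).add second).congr_fun fun k => ?_
  rw [Nat.descFactorial_one, Nat.cast_descFactorial_two]
  ring

lemma abs_sub_le_of_hasSum_poissonWeight_mul (hr : 0 ≤ r) {p : ℕ → ℝ} {P a D α β : ℝ}
    (hp : ∀ k : ℕ, |p k - a - (k - r) * D| ≤ α + β * (k - r) ^ 2)
    (hP : HasSum (fun k => poissonWeight r k * p k) P) : |P - a| ≤ α + β * r := by
  have error_sum := hP.sub (hasSum_poissonWeight_mul_quadratic r a 0 D)
  rw [zero_mul, add_zero] at error_sum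
  have bound_sum := hasSum_poissonWeight_mul_quadratic r α β 0
  refine error_sum.norm_le_of_bounded bound_sum fun k => ?_
  rw [← mul_sub, norm_mul, Real.norm_of_nonneg (poissonWeight_nonneg hr k)]
  refine mul_le_mul_of_nonneg_left ?_ (poissonWeight_nonneg hr k)
  calc ‖p k - (a + D * (k - r) + 0 * (k - r) ^ 2)‖ = |p k - a - (k - r) * D| := by
        rw [Real.norm_eq_abs]
        ring_nf
    _ ≤ α + 0 * (k - r) + β * (k - r) ^ 2 := (hp k).trans_eq (by ring)

lemma hasSum_poissonWeight_mul_convPow {E : Type*} [MeasurableSpace E] [AddMonoid E]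
    [MeasurableAdd₂ E] (F : Measure E) [IsProbabilityMeasure F] (hr : 0 ≤ r) {B : Set E}
    (hB : MeasurableSet B) :
    HasSum (fun k => poissonWeight r k * (convPow F k).real B) ((cpois r F).real B) := by
  have term_eq (k : ℕ) : poissonWeight r k * (convPow F k).real B =
      (ENNReal.ofReal (poissonWeight r k) * convPow F k B).toReal := by
    rw [ENNReal.toReal_mul, ENNReal.toReal_ofReal (poissonWeight_nonneg hr k), Measure.real]
  have summable : Summable fun k => poissonWeight r k * (convPow F k).real B :=
    (hasSum_poissonWeight r).summable.of_nonneg_of_le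
      (fun k => mul_nonneg (poissonWeight_nonneg hr k) measureReal_nonneg)
      fun k => mul_le_of_le_one_right (poissonWeight_nonneg hr k) measureReal_le_one
  have cpois_eq : (cpois r F).real B = ∑' k, poissonWeight r k * (convPow F k).real B := by
    simp only [term_eq]
    rw [← ENNReal.tsum_toReal_eq fun k =>
      ENNReal.mul_ne_top ENNReal.ofReal_ne_top (measure_ne_top _ _)]
    rw [Measure.real, cpois, Measure.sum_apply _ hB]
    rfl
  exact cpois_eq ▸ summable.hasSum

end Poisson

section Accompanying

variable {κ : Type*} [Fintype κ]

lemma abs_convPow_Iic_sub_cpois_Iic_le (F : Measure (κ → ℝ)) [IsProbabilityMeasure F]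
    [F.IsNegInvariant] (b : κ → ℝ) {n : ℕ} (hn : n ≠ 0) :
    |(convPow F n).real (Iic b) - (cpois n F).real (Iic b)| ≤
      2 * linearApproxConst (Fintype.card κ) / √n := by
  obtain ⟨D, hD⟩ := exists_linear_approx_convPow F b hn
  set c := linearApproxConst (Fintype.card κ) / √n
  rw [abs_sub_comm]
  calc |(cpois n F).real (Iic b) - (convPow F n).real (Iic b)| ≤ c + c / n * n :=
        abs_sub_le_of_hasSum_poissonWeight_mul n.cast_nonneg
          (fun k => (hD k).trans_eq (by ring))
          (hasSum_poissonWeight_mul_convPow F n.cast_nonneg measurableSet_Iic)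
    _ = 2 * linearApproxConst (Fintype.card κ) / √n := by
        rw [div_mul_cancel₀ _ (Nat.cast_ne_zero.2 hn), mul_div_assoc, two_mul]

theorem stmt8_general {E : Type*} [AddGroup E] [MeasurableSpace E] [MeasurableAdd₂ E]
    [MeasurableNeg E] (F : Measure E) [IsProbabilityMeasure F] [F.IsNegInvariant]
    {φ : E →+ (κ → ℝ)} (hφ : Measurable φ) (b : κ → ℝ) {n : ℕ} (hn : n ≠ 0) :
    |(convPow F n).real {y | ∀ i, φ y i ≤ b i} - (cpois n F).real {y | ∀ i, φ y i ≤ b i}| ≤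
      2 * linearApproxConst (Fintype.card κ) / √n := by
  have : IsProbabilityMeasure (F.map φ) := Measure.isProbabilityMeasure_map hφ.aemeasurable
  have : (F.map φ).IsNegInvariant := ⟨by
    rw [Measure.neg, Measure.map_map measurable_neg hφ]
    conv_rhs => rw [← Measure.map_neg_eq_self F, Measure.map_map hφ measurable_neg]
    congr 1
    funext y
    simp⟩
  have core := abs_convPow_Iic_sub_cpois_Iic_le (F.map φ) b hn
  rwa [convPow_map F hφ, cpois_map F hφ, map_measureReal_apply hφ measurableSet_Iic,
    map_measureReal_apply hφ measurableSet_Iic] at core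

end Accompanying

theorem stmt8 :
    ∃ C : ℕ → ℝ, (∀ d, 0 < C d) ∧
      ∀ (d n : ℕ), 0 < d → 0 < n →
        ∀ F : Measure (Euc d), IsProbabilityMeasure F → IsSymmMeasure F →
          kolmDist (convPow F n) (cpois n F) ≤ C d / Real.sqrt n := by
  refine ⟨fun d => 2 * linearApproxConst d, fun d => mul_pos two_pos (linearApproxConst_pos d),
    fun d n _ hn F _ hF => ciSup_le fun x => ?_⟩
  have : F.IsNegInvariant := ⟨hF⟩
  simpa [Measure.real] using stmt8_general F (φ := (WithLp.addEquiv 2 (Fin d → ℝ)).toAddMonoidHom)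
    (WithLp.measurable_ofLp 2 _) x hn.ne'
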